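/- Let G be any group and let W = G ≀ ℤ be the restricted wreath product. Then for every n ≥ 1 and every separable dual Banach W-module E, the bounded cohomology Hb^n(W, E) vanishes: every bounded function f : W^n → E with δf = 0 equals δb for some bounded b : W^{n−1} → E. -/

import Mathlib

open scoped BigOperators

/-- A cochain (function into a normed space) is bounded if its norms are uniformly bounded. -/
def IsBddCochain {G : Type*} {E : Type*} [NormedAddCommGroup E] {n : ℕ}
    (f : (Fin n → G) → E) : Prop :=
  ∃ C : ℝ, ∀ g, ‖f g‖ ≤ C

/-- The inhomogeneous coboundary operator of bounded cohomology, for an action `π` of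
`G` on `E`:
`(δf)(g₁,…,g_{n+1}) = g₁•f(g₂,…,g_{n+1}) + ∑_{i=1}^{n} (−1)^i f(g₁,…,g_i·g_{i+1},…,g_{n+1})`
`+ (−1)^{n+1} f(g₁,…,g_n)`. -/
def bddDelta {G : Type*} [Group G] {E : Type*} [NormedAddCommGroup E] [Module ℝ E]
    (π : G → E → E) (n : ℕ) (f : (Fin n → G) → E) : (Fin (n + 1) → G) → E :=
  fun g =>
    π (g 0) (f (fun j => g j.succ)) +
    (∑ i : Fin n, ((-1 : ℝ) ^ ((i : ℕ) + 1)) •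
      f (fun j => if (j : ℕ) < (i : ℕ) then g (Fin.castSucc j)
        else if (j : ℕ) = (i : ℕ) then g (Fin.castSucc j) * g j.succ
        else g j.succ)) +
    ((-1 : ℝ) ^ (n + 1)) • f (fun j => g (Fin.castSucc j))

/-- Vanishing of the bounded cohomology `Hb^n(G,E)` for all `n ≥ 1`, with respect to the
`G`-action `π` on `E`: every bounded cocycle of degree `n ≥ 1` is the coboundary of a
bounded cochain. -/
def HbVanish {G : Type*} [Group G] {E : Type*} [NormedAddCommGroup E] [Module ℝ E]
    (π : G → E → E) : Prop :=
  ∀ (n : ℕ) (f : (Fin (n + 1) → G) → E), IsBddCochain f →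
    bddDelta π (n + 1) f = 0 →
    ∃ b : (Fin n → G) → E, IsBddCochain b ∧ bddDelta π n b = f

/-- A group is boundedly acyclic if `Hb^n(G,ℝ) = 0` for all `n ≥ 1`, where `ℝ` carries
the trivial `G`-action. -/
def BoundedlyAcyclic (G : Type*) [Group G] : Prop :=
  HbVanish (G := G) (E := ℝ) (fun _ v => v)

/-- The restricted product of copies of `G` indexed by `ι`: finitely supported
functions `ι → G` under pointwise multiplication. -/
def finSupp (ι : Type*) (G : Type*) [Group G] : Subgroup (ι → G) where
  carrier := {f | (Function.mulSupport f).Finite}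
  mul_mem' := by
    intro a b ha hb
    exact Set.Finite.subset (ha.union hb) (Function.mulSupport_mul a b)
  one_mem' := by simp [Function.mulSupport_one]
  inv_mem' := by
    intro a ha
    simpa [Function.mulSupport_inv] using ha

/-- The shift action of `ℤ` (written multiplicatively) on the restricted product
`⊕_ℤ G`: `(k • f) n = f (n - k)`. -/
def shiftHom (G : Type*) [Group G] :
    Multiplicative ℤ →* MulAut (finSupp ℤ G) where
  toFun k :=
    { toFun := fun f => ⟨fun n => (f : ℤ → G) (n - k.toAdd),
        Set.Finite.preimage (Set.injOn_of_injective
          (fun a b hab => by omega)) f.2⟩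
      invFun := fun f => ⟨fun n => (f : ℤ → G) (n + k.toAdd),
        Set.Finite.preimage (Set.injOn_of_injective
          (fun a b hab => by omega)) f.2⟩
      left_inv := by
        intro f; ext n; simp
      right_inv := by
        intro f; ext n; simp
      map_mul' := by
        intro f g; rfl }
  map_one' := by
    ext f n; simp
  map_mul' := by
    intro k l
    ext f n
    show (f : ℤ → G) (n - (k.toAdd + l.toAdd)) = (f : ℤ → G) (n - k.toAdd - l.toAdd)
    rw [sub_add_eq_sub_sub]

/-- The restricted wreath product `W = G ≀ ℤ = (⊕_ℤ G) ⋊ ℤ`. -/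
abbrev WreathZ (G : Type*) [Group G] :=
  SemidirectProduct (finSupp ℤ G) (Multiplicative ℤ) (shiftHom G)

/-- The contragredient action of `G` on the continuous dual of `F` induced by an
isometric action `ρ` of `G` on `F`: `(g • φ)(v) = φ (g⁻¹ • v)`. -/
def contragredient {G : Type*} [Group G] {F : Type*} [NormedAddCommGroup F]
    [NormedSpace ℝ F] (ρ : G →* (F ≃ₗᵢ[ℝ] F)) : G → (F →L[ℝ] ℝ) → (F →L[ℝ] ℝ) :=
  fun g φ => φ.comp (ρ g⁻¹).toLinearIsometry.toContinuousLinearMap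


set_option linter.unusedVariables false
/-- A finitely additive mean on a set, extended linearly to all functions. -/
structure BMean (X : Type*) where
  I : (X → ℝ) →ₗ[ℝ] ℝ
  pos : ∀ (f : X → ℝ) (C : ℝ), (∀ x, 0 ≤ f x) → (∀ x, f x ≤ C) → 0 ≤ I f
  one : I (fun _ => 1) = 1

namespace BMean

theorem const {X : Type*} (I : BMean X) (c : ℝ) : I.I (fun _ => c) = c := by
  have h : (fun _ : X => c) = c • (fun _ : X => (1 : ℝ)) := by ext; simp
  rw [h, map_smul, I.one]; simp

theorem mono {X : Type*} (I : BMean X) {f g : X → ℝ} (C : ℝ) (hf : ∀ x, |f x| ≤ C)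
    (hg : ∀ x, |g x| ≤ C) (h : ∀ x, f x ≤ g x) : I.I f ≤ I.I g := by
  have h1 := I.pos (g - f) (2 * C) (fun x => by simpa using h x) (fun x => by
    have := abs_le.1 (hf x); have := abs_le.1 (hg x); simp only [Pi.sub_apply]; linarith)
  rw [map_sub] at h1; linarith

theorem bound {X : Type*} (I : BMean X) {f : X → ℝ} {C : ℝ} (hf : ∀ x, |f x| ≤ C) :
    |I.I f| ≤ C := by
  have hC : ∀ x : X, |C| ≤ |C| := fun _ => le_rfl
  have hf' : ∀ x, |f x| ≤ |C| := fun x => (hf x).trans (le_abs_self C)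
  rw [abs_le]
  constructor
  · have := I.mono (f := fun _ => -C) (g := f) |C| (by simp) hf'
      (fun x => (abs_le.1 (hf x)).1)
    rwa [I.const] at this
  · have := I.mono (g := fun _ => C) (f := f) |C| hf' (by simp)
      (fun x => (abs_le.1 (hf x)).2)
    rwa [I.const] at this

theorem mulc {X : Type*} (I : BMean X) (f : X → ℝ) (c : ℝ) :
    I.I (fun x => f x * c) = I.I f * c := by
  have h : (fun x => f x * c) = c • f := by ext; simp [mul_comm]
  rw [h, map_smul]; simp [mul_comm]

theorem addf {X : Type*} (I : BMean X) (f g : X → ℝ) :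
    I.I (fun x => f x + g x) = I.I f + I.I g := map_add I.I f g

theorem subf {X : Type*} (I : BMean X) (f g : X → ℝ) :
    I.I (fun x => f x - g x) = I.I f - I.I g := map_sub I.I f g

theorem sumf {X ι : Type*} (I : BMean X) (s : Finset ι) (f : ι → X → ℝ) :
    I.I (fun x => ∑ i ∈ s, f i x) = ∑ i ∈ s, I.I (f i) := by
  have h : (fun x => ∑ i ∈ s, f i x) = ∑ i ∈ s, f i := by ext; simp
  rw [h, map_sum]

/-- Point mass. -/
def dirac {X : Type*} (x : X) : BMean X where
  I := LinearMap.proj x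
  pos := fun f C h _ => h x
  one := rfl

/-- Push-forward. -/
def map {X Y : Type*} (φ : X → Y) (I : BMean X) : BMean Y where
  I := { toFun := fun f => I.I (fun x => f (φ x))
         map_add' := fun f g => map_add I.I _ _
         map_smul' := fun c f => map_smul I.I _ _ }
  pos := fun f C h h' => I.pos _ C (fun x => h _) (fun x => h' _)
  one := I.one

/-- Integration of a family of means. -/
def bind {X Y : Type*} (I : BMean X) (J : X → BMean Y) : BMean Y where
  I := { toFun := fun f => I.I (fun x => (J x).I f)
         map_add' := fun f g => by
           simp only [map_add]; exact map_add I.I _ _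
         map_smul' := fun c f => by
           simp only [map_smul]; exact map_smul I.I _ _ }
  pos := fun f C h h' => I.pos _ |C| (fun x => (J x).pos f C h h') (fun x =>
    le_of_abs_le ((J x).bound (fun y => by
      rw [abs_of_nonneg (h y)]; exact (h' y).trans (le_abs_self C))))
  one := by
    show I.I (fun x => (J x).I (fun _ => 1)) = 1
    simp only [(J _).one, I.one]

/-- Uniform mean on a nonempty finite type. -/
noncomputable def unif (S : Type*) [Fintype S] [Nonempty S] : BMean S where
  I := { toFun := fun f => (∑ a, f a) / (Fintype.card S : ℝ)
         map_add' := fun f g => by simp [Finset.sum_add_distrib, add_div]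
         map_smul' := fun c f => by simp [← Finset.mul_sum, mul_div_assoc] }
  pos := fun f C h _ => div_nonneg (Finset.sum_nonneg fun a _ => h a) (by positivity)
  one := by
    have : (Fintype.card S : ℝ) ≠ 0 := by simp
    simp [this]

theorem dirac_I {X : Type*} (x : X) (f : X → ℝ) : (dirac x).I f = f x := rfl
theorem map_I {X Y : Type*} (φ : X → Y) (I : BMean X) (f : Y → ℝ) :
    (map φ I).I f = I.I (fun x => f (φ x)) := rfl
theorem bind_I {X Y : Type*} (I : BMean X) (J : X → BMean Y) (f : Y → ℝ) :
    (bind I J).I f = I.I (fun x => (J x).I f) := rfl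
theorem unif_I {S : Type*} [Fintype S] [Nonempty S] (f : S → ℝ) :
    (unif S).I f = (∑ a, f a) / (Fintype.card S : ℝ) := rfl

end BMean

/-- Cesàro averages. -/
noncomputable def cesaro (f : ℕ → ℝ) (n : ℕ) : ℝ := (∑ i ∈ Finset.range (n + 1), f i) / (n + 1)

theorem cesaro_bound {f : ℕ → ℝ} {C : ℝ} (hf : ∀ n, |f n| ≤ C) (n : ℕ) : |cesaro f n| ≤ C := by
  unfold cesaro
  have hn : (0 : ℝ) < (n : ℝ) + 1 := by positivity
  rw [abs_div, abs_of_pos hn, div_le_iff₀ hn]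
  refine (Finset.abs_sum_le_sum_abs _ _).trans ?_
  refine (Finset.sum_le_sum (fun i _ => hf i)).trans ?_
  simp [mul_comm]

theorem cesaro_lim {f : ℕ → ℝ} (hf : ∃ C, ∀ n, |f n| ≤ C) :
    ∃ x, Filter.Tendsto (cesaro f) (Filter.hyperfilter ℕ : Filter ℕ) (nhds x) := by
  obtain ⟨C, hC⟩ := hf
  have hK : IsCompact (Set.Icc (-C) C) := isCompact_Icc
  have := hK.ultrafilter_le_nhds ((Filter.hyperfilter ℕ).map (cesaro f)) (by
    rw [Filter.le_principal_iff]
    refine Filter.mem_map.2 ?_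
    exact Filter.univ_mem' (fun n => abs_le.1 (cesaro_bound hC n)))
  obtain ⟨x, -, hx⟩ := this
  exact ⟨x, hx⟩

theorem exists_blim : ∃ m : BMean ℕ, ∀ f : ℕ → ℝ, (∃ C, ∀ n, |f n| ≤ C) →
    m.I (fun n => f (n + 1)) = m.I f := by
  classical
  let Bd : Submodule ℝ (ℕ → ℝ) :=
    { carrier := {f | ∃ C, ∀ n, |f n| ≤ C}
      add_mem' := by
        rintro f g ⟨C, hC⟩ ⟨D, hD⟩
        exact ⟨C + D, fun n => (abs_add_le _ _).trans (add_le_add (hC n) (hD n))⟩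
      zero_mem' := ⟨0, by simp⟩
      smul_mem' := by
        rintro c f ⟨C, hC⟩
        refine ⟨|c| * C, fun n => ?_⟩
        simp only [Pi.smul_apply, smul_eq_mul, abs_mul]
        exact mul_le_mul_of_nonneg_left (hC n) (abs_nonneg _) }
  choose L hL using fun f : Bd => cesaro_lim f.2
  have hadd : ∀ f g : ℕ → ℝ, cesaro (f + g) = cesaro f + cesaro g := by
    intro f g; ext n; simp [cesaro, Finset.sum_add_distrib, add_div]
  have hsmul : ∀ (c : ℝ) (f : ℕ → ℝ), cesaro (c • f) = c • cesaro f := by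
    intro c f; ext n; simp [cesaro, ← Finset.mul_sum, mul_div_assoc]
  let Lm : Bd →ₗ[ℝ] ℝ :=
    { toFun := L
      map_add' := fun f g => by
        refine tendsto_nhds_unique (hL (f + g)) ?_
        have := (hL f).add (hL g)
        simp only [Submodule.coe_add, hadd]
        exact this
      map_smul' := fun c f => by
        refine tendsto_nhds_unique (hL (c • f)) ?_
        have := (hL f).const_mul c
        simp only [Submodule.coe_smul, hsmul]
        exact this }
  obtain ⟨I, hI⟩ := Lm.exists_extend
  have hIL : ∀ (f : ℕ → ℝ) (hf : f ∈ Bd), I f = L ⟨f, hf⟩ := fun f hf =>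
    congrArg (fun φ : Bd →ₗ[ℝ] ℝ => φ ⟨f, hf⟩) hI
  refine ⟨⟨I, ?_, ?_⟩, ?_⟩
  · intro f C h0 h1
    have hf : f ∈ Bd := ⟨C, fun n => by rw [abs_of_nonneg (h0 n)]; exact h1 n⟩
    rw [hIL f hf]
    refine ge_of_tendsto (hL ⟨f, hf⟩) (Filter.Eventually.of_forall fun n => ?_)
    exact div_nonneg (Finset.sum_nonneg fun i _ => h0 i) (by positivity)
  · have hf : (fun _ => 1 : ℕ → ℝ) ∈ Bd := ⟨1, by simp⟩
    rw [hIL _ hf]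
    refine tendsto_nhds_unique (hL _) ?_
    have : cesaro (fun _ => 1) = fun _ => 1 := by
      ext n
      have : (n : ℝ) + 1 ≠ 0 := by positivity
      simp [cesaro, this]
    simp only [this]
    exact tendsto_const_nhds
  · rintro f ⟨C, hC⟩
    show I _ = I f
    have hf : f ∈ Bd := ⟨C, hC⟩
    have hf' : (fun n => f (n + 1)) ∈ Bd := ⟨C, fun n => hC _⟩
    rw [hIL f hf, hIL _ hf']
    have h0 : Filter.Tendsto (fun n => cesaro (fun n => f (n + 1)) n - cesaro f n)
        (Filter.hyperfilter ℕ : Filter ℕ) (nhds 0) := by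
      refine Filter.Tendsto.mono_left ?_ (Nat.hyperfilter_le_atTop)
      have hb : Filter.Tendsto (fun n : ℕ => 2 * C * (1 / ((n : ℝ) + 1))) Filter.atTop
          (nhds 0) := by
        simpa using (tendsto_one_div_add_atTop_nhds_zero_nat (𝕜 := ℝ)).const_mul (2 * C)
      refine squeeze_zero_norm (fun n => ?_) hb
      have hn : (0 : ℝ) < (n : ℝ) + 1 := by positivity
      have : cesaro (fun n => f (n + 1)) n - cesaro f n = (f (n + 1) - f 0) / (n + 1) := by
        unfold cesaro
        rw [← sub_div, Finset.sum_range_succ' f n, Finset.sum_range_succ]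
        congr 1; ring
      rw [this, Real.norm_eq_abs, abs_div, abs_of_pos hn, mul_one_div]
      refine div_le_div_of_nonneg_right ?_ hn.le
      have := abs_sub (f (n + 1)) (f 0)
      have := hC (n + 1)
      have := hC 0
      linarith
    have h1 := (hL ⟨_, hf'⟩).sub (hL ⟨f, hf⟩)
    have h2 := tendsto_nhds_unique h1 h0
    linarith

/-- A fixed Banach limit. -/
noncomputable def blim : BMean ℕ := Classical.choose exists_blim

theorem blim_shift {f : ℕ → ℝ} {C : ℝ} (hf : ∀ n, |f n| ≤ C) :
    blim.I (fun n => f (n + 1)) = blim.I f :=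
  Classical.choose_spec exists_blim f ⟨C, hf⟩

theorem blim_congr {f g : ℕ → ℝ} (N : ℕ) (h : ∀ n, N ≤ n → f n = g n) :
    blim.I f = blim.I g := by
  induction N generalizing f g with
  | zero => congr 1; ext n; exact h n (Nat.zero_le _)
  | succ N ih =>
    have key : blim.I (fun n => f n - g n) = 0 := by
      have hb : ∀ n, |f n - g n| ≤ ∑ i ∈ Finset.range (N + 1), |f i - g i| := by
        intro n
        by_cases hn : N + 1 ≤ n
        · rw [h n hn]; simp; exact Finset.sum_nonneg fun i _ => abs_nonneg _
        · exact Finset.single_le_sum (f := fun i => |f i - g i|) (fun i _ => abs_nonneg _)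
            (Finset.mem_range.2 (by omega))
      rw [← blim_shift hb]
      rw [ih (g := fun _ => 0) (fun n hn => by rw [h _ (by omega)]; simp)]
      exact blim.const 0
    rw [blim.subf] at key; linarith

section Words

variable {S : Type*} [Fintype S] [Nonempty S] [DecidableEq S]

/-- Uniform mean on words of length `L`. -/
noncomputable def unifList (S : Type*) [Fintype S] [Nonempty S] : ℕ → BMean (List S)
  | 0 => BMean.dirac []
  | L + 1 => (BMean.unif S).bind (fun a => (unifList S L).map (fun l => a :: l))

/-- Density of left concatenation by a word. -/
noncomputable def dens : List S → List S → ℝ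
  | [], _ => 1
  | _ :: _, [] => 0
  | a :: c, b :: l => if a = b then (Fintype.card S : ℝ) * dens c l else 0

theorem dens_nonneg (c l : List S) : 0 ≤ dens c l := by
  induction c generalizing l with
  | nil => simp [dens]
  | cons a c ih =>
    cases l with
    | nil => simp [dens]
    | cons b l =>
      simp only [dens]
      split_ifs
      · exact mul_nonneg (by positivity) (ih l)
      · exact le_rfl

theorem dens_le (c l : List S) : dens c l ≤ (Fintype.card S : ℝ) ^ c.length := by
  induction c generalizing l with
  | nil => simp [dens]
  | cons a c ih =>
    cases l with
    | nil => simp only [dens]; positivity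
    | cons b l =>
      simp only [dens]
      split_ifs
      · rw [List.length_cons, pow_succ']
        exact mul_le_mul_of_nonneg_left (ih l) (by positivity)
      · positivity

theorem dens_abs (c l : List S) : |dens c l| ≤ (Fintype.card S : ℝ) ^ c.length := by
  rw [abs_of_nonneg (dens_nonneg c l)]; exact dens_le c l

/-- Mean on words: Banach limit over the length. -/
noncomputable def muL (S : Type*) [Fintype S] [Nonempty S] : BMean (List S) :=
  blim.bind (unifList S)

theorem muL_step {Φ : List S → ℝ} {C : ℝ} (hΦ : ∀ l, |Φ l| ≤ C) :
    (muL S).I Φ = (muL S).I (fun l => (∑ b, Φ (b :: l)) / (Fintype.card S : ℝ)) := by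
  show blim.I (fun L => (unifList S L).I Φ) = blim.I (fun L => (unifList S L).I _)
  rw [← blim_shift (fun n => (unifList S n).bound hΦ)]
  congr 1
  ext L
  show (∑ b, (unifList S L).I (fun l => Φ (b :: l))) / (Fintype.card S : ℝ) = _
  simp only [div_eq_mul_inv]
  rw [BMean.mulc, BMean.sumf]

theorem muL_dens (c : List S) {Ψ : List S → ℝ} {C : ℝ} (hΨ : ∀ l, |Ψ l| ≤ C) :
    (muL S).I (fun l => Ψ (c ++ l)) = (muL S).I (fun l => Ψ l * dens c l) := by
  induction c generalizing Ψ with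
  | nil => simp [dens]
  | cons a c ih =>
    have hcard : (Fintype.card S : ℝ) ≠ 0 := by simp
    have h1 := ih (Ψ := fun l => Ψ (a :: l)) (fun l => hΨ _)
    simp only [List.cons_append]
    rw [h1, muL_step (C := C * (Fintype.card S : ℝ) ^ (a :: c).length)
      (Φ := fun l => Ψ l * dens (a :: c) l)]
    · congr 1
      ext l
      simp only [dens]
      simp only [mul_ite, mul_zero, Finset.sum_ite_eq, Finset.mem_univ, if_true]
      field_simp
    · intro l
      rw [abs_mul]
      exact mul_le_mul (hΨ l) (dens_abs _ _) (abs_nonneg _) ((abs_nonneg _).trans (hΨ l))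

/-- Finitely supported word configurations. -/
abbrev ZZ (S : Type*) := ℤ →₀ FreeAddMonoid S

/-- Density of a word, on the free monoid. -/
noncomputable def dA (c l : FreeAddMonoid S) : ℝ := dens (FreeAddMonoid.toList c) (FreeAddMonoid.toList l)

noncomputable def cA (c : FreeAddMonoid S) : ℝ := (Fintype.card S : ℝ) ^ (FreeAddMonoid.toList c).length


theorem dA_zero (l : FreeAddMonoid S) : dA 0 l = 1 := by
  simp [dA, dens]

theorem cA_zero : cA (0 : FreeAddMonoid S) = 1 := by
  simp [cA]

noncomputable def muA (S : Type*) [Fintype S] [Nonempty S] : BMean (FreeAddMonoid S) :=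
  (muL S).map FreeAddMonoid.ofList

theorem muA_dens (c : FreeAddMonoid S) {Ψ : FreeAddMonoid S → ℝ} {C : ℝ} (hΨ : ∀ l, |Ψ l| ≤ C) :
    (muA S).I (fun l => Ψ (c + l)) = (muA S).I (fun l => Ψ l * dA c l) :=
  muL_dens (FreeAddMonoid.toList c) (Ψ := fun l => Ψ (FreeAddMonoid.ofList l)) (fun l => hΨ _)

/-- Density for configurations. -/
noncomputable def DU (u z : ZZ S) : ℝ := ∏ i ∈ u.support, dA (u i) (z i)

noncomputable def cU (u : ZZ S) : ℝ := ∏ i ∈ u.support, cA (u i)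

theorem DU_nonneg (u z : ZZ S) : 0 ≤ DU u z :=
  Finset.prod_nonneg fun i _ => dens_nonneg _ _

theorem DU_le (u z : ZZ S) : DU u z ≤ cU u :=
  Finset.prod_le_prod (fun i _ => dens_nonneg _ _) (fun i _ => dens_le _ _)

theorem DU_abs (u z : ZZ S) : |DU u z| ≤ cU u := by
  rw [abs_of_nonneg (DU_nonneg u z)]; exact DU_le u z

theorem DU_update (u z : ZZ S) (s : ℤ) (l : FreeAddMonoid S) :
    DU u (z.update s l) = dA (u s) l * DU (u.erase s) z := by
  classical
  unfold DU
  have h2 : ∏ i ∈ (u.erase s).support, dA ((u.erase s) i) (z i) =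
      ∏ i ∈ u.support.erase s, dA (u i) (z.update s l i) := by
    rw [Finsupp.support_erase]
    refine Finset.prod_congr (by ext; simp) fun i hi => ?_
    have hi : i ≠ s := Finset.ne_of_mem_erase hi
    rw [Finsupp.erase_ne hi]
    simp [Finsupp.coe_update, Function.update_of_ne hi]
  rw [h2]
  by_cases hs : s ∈ u.support
  · rw [← Finset.mul_prod_erase _ _ hs]
    simp
  · rw [Finset.erase_eq_of_notMem hs, Finsupp.notMem_support_iff.1 hs, dA_zero, one_mul]

theorem DU_add_of_disjoint {u u' : ZZ S} (h : Disjoint u.support u'.support) (z : ZZ S) :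
    DU u' (u + z) = DU u' z := by
  unfold DU
  refine Finset.prod_congr rfl fun i hi => ?_
  have : u i = 0 := Finsupp.notMem_support_iff.1 (fun h' => Finset.disjoint_left.1 h h' hi)
  rw [Finsupp.add_apply, this, zero_add]

/-- Iterated word mean over the window `[s, s+L)`. -/
noncomputable def beta (S : Type*) [Fintype S] [Nonempty S] : ℤ → ℕ → BMean (ZZ S)
  | _, 0 => BMean.dirac 0
  | s, L + 1 => (muA S).bind (fun l => (beta S (s + 1) L).map (fun z => z.update s l))

theorem beta_succ (s : ℤ) (L : ℕ) (Φ : ZZ S → ℝ) :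
    (beta S s (L + 1)).I Φ = (muA S).I (fun l => (beta S (s + 1) L).I (fun z => Φ (z.update s l))) :=
  rfl

theorem beta_dens (L : ℕ) (s : ℤ) (u : ZZ S) (hu : ∀ i ∈ u.support, s ≤ i ∧ i < s + L)
    {Φ : ZZ S → ℝ} {C : ℝ} (hΦ : ∀ z, |Φ z| ≤ C) :
    (beta S s L).I (fun z => Φ (u + z)) = (beta S s L).I (fun z => Φ z * DU u z) := by
  induction L generalizing s u Φ C with
  | zero =>
    have : u = 0 := by
      rw [← Finsupp.support_eq_empty, Finset.eq_empty_iff_forall_notMem]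
      intro i hi
      have := hu i hi
      push_cast at this
      omega
    subst this
    simp [DU]
  | succ L ih =>
    rw [beta_succ, beta_succ]
    have hu' : ∀ i ∈ (u.erase s).support, s + 1 ≤ i ∧ i < s + 1 + L := by
      intro i hi
      rw [Finsupp.support_erase, Finset.mem_erase] at hi
      have := hu i hi.2
      push_cast at this
      have := hi.1
      omega
    have hC : 0 ≤ C := (abs_nonneg _).trans (hΦ 0)
    have e1 : ∀ (l : FreeAddMonoid S) (z : ZZ S),
        u + z.update s l = (u.erase s + z).update s (u s + l) := by
      intro l z
      ext1 i
      by_cases hi : i = s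
      · subst hi; simp
      · simp [hi]
    simp only [e1]
    have e2 : ∀ l : FreeAddMonoid S,
        (beta S (s + 1) L).I (fun z => Φ ((u.erase s + z).update s (u s + l))) =
        (beta S (s + 1) L).I (fun z => Φ (z.update s (u s + l)) * DU (u.erase s) z) := fun l =>
      ih (s + 1) (u.erase s) hu' (Φ := fun z => Φ (z.update s (u s + l))) (fun z => hΦ _)
    simp only [e2]
    have e3 := muA_dens (u s) (C := C * cU (u.erase s)) (Ψ := fun l => (beta S (s + 1) L).I
      (fun z => Φ (z.update s l) * DU (u.erase s) z)) (fun l => BMean.bound _ (fun z => by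
        rw [abs_mul]
        exact mul_le_mul (hΦ _) (DU_abs _ _) (abs_nonneg _) hC))
    rw [e3]
    congr 1
    ext l
    rw [← BMean.mulc]
    congr 1
    ext z
    rw [DU_update]
    ring

/-- Shift of configurations. -/
noncomputable def shZ (j : ℤ) (z : ZZ S) : ZZ S := Finsupp.equivMapDomain (Equiv.addRight j) z

theorem shZ_apply (j : ℤ) (z : ZZ S) (i : ℤ) : shZ j z i = z (i - j) := by
  simp [shZ, sub_eq_add_neg]

theorem beta_shift (L : ℕ) (s : ℤ) (Φ : ZZ S → ℝ) :
    (beta S s L).I (fun z => Φ (shZ 1 z)) = (beta S (s + 1) L).I Φ := by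
  induction L generalizing s Φ with
  | zero =>
    show Φ (shZ 1 0) = Φ 0
    congr 1
  | succ L ih =>
    rw [beta_succ, beta_succ]
    congr 1
    ext l
    rw [← ih (s + 1) (fun z => Φ (z.update (s + 1) l))]
    congr 1
    ext z
    congr 1
    ext1 i
    by_cases hi : i = s + 1
    · subst hi; simp [shZ_apply]
    · have : i - 1 ≠ s := by omega
      simp [shZ_apply, hi, this]

theorem shZ_support (j : ℤ) (u : ZZ S) : (shZ j u).support = u.support.map (Equiv.addRight j).toEmbedding := by
  ext i
  simp [shZ_apply, Finsupp.mem_support_iff, sub_eq_add_neg]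

theorem cU_shZ (j : ℤ) (u : ZZ S) : cU (shZ j u) = cU u := by
  unfold cU
  rw [shZ_support, Finset.prod_map]
  refine Finset.prod_congr rfl fun i _ => ?_
  simp [shZ_apply]

/-- The basic mean on configurations together with a translation parameter. -/
noncomputable def kappa (S : Type*) [Fintype S] [Nonempty S] : BMean (ZZ S × ℕ) :=
  blim.bind fun a => blim.bind fun L => blim.bind fun k =>
    (beta S (-(a : ℤ)) L).map (fun z => (z, k))

theorem kappa_dens (u : ZZ S) {Φ : ZZ S × ℕ → ℝ} {C : ℝ} (hΦ : ∀ z, |Φ z| ≤ C) :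
    (kappa S).I (fun ω => Φ (u + ω.1, ω.2)) = (kappa S).I (fun ω => Φ ω * DU u ω.1) := by
  obtain ⟨N, hN⟩ : ∃ N : ℕ, ∀ i ∈ u.support, |i| ≤ N := by
    refine ⟨∑ i ∈ u.support, i.natAbs, fun i hi => ?_⟩
    rw [Int.abs_eq_natAbs]
    exact_mod_cast Finset.single_le_sum (f := fun i : ℤ => i.natAbs) (fun _ _ => Nat.zero_le _) hi
  refine blim_congr N fun a ha => ?_
  refine blim_congr (a + N + 1) fun L hL => ?_
  show blim.I _ = blim.I _
  congr 1
  ext k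
  refine beta_dens L (-(a : ℤ)) u (fun i hi => ?_) (Φ := fun z => Φ (z, k)) (fun z => hΦ _)
  have := abs_le.1 (hN i hi)
  omega

theorem kappa_shift {Φ : ZZ S × ℕ → ℝ} {C : ℝ} (hΦ : ∀ z, |Φ z| ≤ C) :
    (kappa S).I (fun ω => Φ (shZ 1 ω.1, ω.2 + 1)) = (kappa S).I Φ := by
  let g : ℤ → ℝ := fun s => blim.I fun L => blim.I fun k => (beta S s L).I (fun z => Φ (z, k))
  have hg : ∀ s, |g s| ≤ C := fun s => BMean.bound _ fun L => BMean.bound _ fun k =>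
    BMean.bound _ fun z => hΦ _
  have h1 : (kappa S).I Φ = blim.I (fun a => g (-(a : ℤ))) := rfl
  have h2 : (kappa S).I (fun ω => Φ (shZ 1 ω.1, ω.2 + 1)) =
      blim.I (fun a => g (-(a : ℤ) + 1)) := by
    show blim.I _ = blim.I _
    congr 1
    ext a
    show blim.I _ = blim.I _
    congr 1
    ext L
    show blim.I (fun k => (beta S (-(a : ℤ)) L).I (fun z => Φ (shZ 1 z, k + 1))) = blim.I _
    have e : ∀ k : ℕ, (beta S (-(a : ℤ)) L).I (fun z => Φ (shZ 1 z, k + 1)) =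
        (beta S (-(a : ℤ) + 1) L).I (fun z => Φ (z, k + 1)) := fun k =>
      beta_shift L _ (fun z => Φ (z, k + 1))
    simp only [e]
    exact blim_shift (f := fun k => (beta S (-(a : ℤ) + 1) L).I (fun z => Φ (z, k)))
      (fun k => BMean.bound _ fun z => hΦ _)
  rw [h1, h2, ← blim_shift (f := fun a : ℕ => g (-(a : ℤ) + 1)) (fun n => hg _)]
  congr 1
  ext a
  push_cast
  congr 1
  ring

end Words

section ListCochains

/-- Alternating coboundary on list cochains. -/
def dl {W : Type*} : List W → (List W → ℝ) → ℝ
  | [], _ => 0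
  | a :: l, f => f l - dl l (fun l' => f (a :: l'))

theorem dl_add {W : Type*} (l : List W) (f g : List W → ℝ) :
    dl l (fun l' => f l' + g l') = dl l f + dl l g := by
  induction l generalizing f g with
  | nil => simp [dl]
  | cons a l ih => simp only [dl, ih]; ring

theorem dl_sub {W : Type*} (l : List W) (f g : List W → ℝ) :
    dl l (fun l' => f l' - g l') = dl l f - dl l g := by
  induction l generalizing f g with
  | nil => simp [dl]
  | cons a l ih => simp only [dl, ih]; ring

theorem dl_smul {W : Type*} (l : List W) (c : ℝ) (f : List W → ℝ) :
    dl l (fun l' => c * f l') = c * dl l f := by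
  induction l generalizing f with
  | nil => simp [dl]
  | cons a l ih => simp only [dl, ih]; ring

theorem dl_map {W W' : Type*} (φ : W → W') (l : List W) (f : List W' → ℝ) :
    dl (l.map φ) f = dl l (fun l' => f (l'.map φ)) := by
  induction l generalizing f with
  | nil => simp [dl]
  | cons a l ih => simp only [dl, ih, List.map_cons]

theorem dl_congr {W : Type*} (l : List W) {f g : List W → ℝ}
    (h : ∀ l', l'.Sublist l → f l' = g l') : dl l f = dl l g := by
  induction l generalizing f g with
  | nil => simp [dl]
  | cons a l ih =>
    simp only [dl]
    rw [h l (List.sublist_cons_self a l), ih]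
    intro l' hl'
    exact h _ (hl'.cons_cons a)

theorem dl_congr_len {W : Type*} (l : List W) {f g : List W → ℝ}
    (h : ∀ l', l'.length + 1 = l.length → f l' = g l') : dl l f = dl l g := by
  induction l generalizing f g with
  | nil => simp [dl]
  | cons a l ih =>
    simp only [dl]
    rw [h l (by simp), ih]
    intro l' hl'
    exact h _ (by simp [hl'])

variable {W Ω : Type*} [Group W] (κ : BMean Ω) (X : Ω → W)

theorem dl_int {Ω W : Type*} (κ : BMean Ω) (l : List W) (f : Ω → List W → ℝ) :
    dl l (fun l' => κ.I (fun ω => f ω l')) = κ.I (fun ω => dl l (f ω)) := by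
  induction l generalizing f with
  | nil => simp only [dl]; rw [κ.const]
  | cons a l ih => simp only [dl, ih]; rw [κ.subf]

/-- Averaging operator. -/
def avg : List W → (List W → ℝ) → ℝ
  | [], f => f []
  | w :: l, f => κ.I (fun ω => avg l (fun l' => f ((w * X ω) :: l')))

/-- Homotopy operator. -/
def hom : List W → (List W → ℝ) → ℝ
  | [], _ => 0
  | w :: l, f => κ.I (fun ω => avg κ X l (fun l' => f (w :: (w * X ω) :: l'))) -
      hom l (fun l' => f (w :: l'))

theorem avg_add (l : List W) (f g : List W → ℝ) :
    avg κ X l (fun l' => f l' + g l') = avg κ X l f + avg κ X l g := by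
  induction l generalizing f g with
  | nil => simp [avg]
  | cons a l ih => simp only [avg, ih]; rw [κ.addf]

theorem avg_sub (l : List W) (f g : List W → ℝ) :
    avg κ X l (fun l' => f l' - g l') = avg κ X l f - avg κ X l g := by
  induction l generalizing f g with
  | nil => simp [avg]
  | cons a l ih => simp only [avg, ih]; rw [κ.subf]

theorem avg_smul (l : List W) (c : ℝ) (f : List W → ℝ) :
    avg κ X l (fun l' => c * f l') = c * avg κ X l f := by
  induction l generalizing f with
  | nil => simp [avg]
  | cons a l ih =>
    simp only [avg, ih]
    simp only [mul_comm c]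
    rw [κ.mulc]

theorem hom_add (l : List W) (f g : List W → ℝ) :
    hom κ X l (fun l' => f l' + g l') = hom κ X l f + hom κ X l g := by
  induction l generalizing f g with
  | nil => simp [hom]
  | cons a l ih => simp only [hom, ih, avg_add]; rw [κ.addf]; ring

theorem hom_sub (l : List W) (f g : List W → ℝ) :
    hom κ X l (fun l' => f l' - g l') = hom κ X l f - hom κ X l g := by
  induction l generalizing f g with
  | nil => simp [hom]
  | cons a l ih => simp only [hom, ih, avg_sub]; rw [κ.subf]; ring

theorem hom_smul (l : List W) (c : ℝ) (f : List W → ℝ) :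
    hom κ X l (fun l' => c * f l') = c * hom κ X l f := by
  induction l generalizing f with
  | nil => simp [hom]
  | cons a l ih =>
    simp only [hom, ih, avg_smul]
    simp only [mul_comm c]
    rw [κ.mulc]; ring

theorem avg_map (g : W) (l : List W) (f : List W → ℝ) :
    avg κ X (l.map (fun w => g * w)) f = avg κ X l (fun l' => f (l'.map (fun w => g * w))) := by
  induction l generalizing f with
  | nil => simp [avg]
  | cons a l ih => simp only [avg, ih, List.map_cons, mul_assoc]

theorem hom_map (g : W) (l : List W) (f : List W → ℝ) :
    hom κ X (l.map (fun w => g * w)) f = hom κ X l (fun l' => f (l'.map (fun w => g * w))) := by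
  induction l generalizing f with
  | nil => simp [hom]
  | cons a l ih => simp only [hom, ih, avg_map, List.map_cons, mul_assoc]

theorem avg_bound (l : List W) {f : List W → ℝ} {C : ℝ} (hf : ∀ l, |f l| ≤ C) :
    |avg κ X l f| ≤ C := by
  induction l generalizing f with
  | nil => exact hf _
  | cons a l ih => exact κ.bound (fun ω => ih (fun l' => hf _))

theorem hom_bound (l : List W) {f : List W → ℝ} {C : ℝ} (hf : ∀ l, |f l| ≤ C) :
    |hom κ X l f| ≤ l.length * C := by
  induction l generalizing f with
  | nil => simp [hom]
  | cons a l ih =>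
    simp only [hom, List.length_cons]
    push_cast
    refine (abs_sub _ _).trans ?_
    have h1 := κ.bound (fun ω => avg_bound κ X l (f := fun l' => f (a :: (a * X ω) :: l')) (fun l' => hf _))
    have h2 := ih (f := fun l' => f (a :: l')) (fun l' => hf _)
    linarith

theorem avg_dl (l : List W) (f : List W → ℝ) :
    avg κ X l (fun l' => dl l' f) = dl l (fun l' => avg κ X l' f) := by
  induction l generalizing f with
  | nil => simp [avg, dl]
  | cons a l ih =>
    simp only [avg, dl]
    simp only [avg_sub, ih]
    rw [κ.subf, κ.const, dl_int]

theorem homotopy (l : List W) (f : List W → ℝ) :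
    hom κ X l (fun l' => dl l' f) + dl l (fun l' => hom κ X l' f) = avg κ X l f - f l := by
  induction l generalizing f with
  | nil => simp [avg, dl, hom]
  | cons a l ih =>
    have h := ih (fun l' => f (a :: l'))
    simp only [avg, dl, hom]
    simp only [avg_sub, hom_sub, dl_sub, avg_dl, dl_int]
    simp only [κ.subf, κ.const]
    linarith

/-- Iterated mean on lists. -/
def kap (κ : BMean Ω) : ℕ → BMean (List Ω)
  | 0 => BMean.dirac []
  | n + 1 => κ.bind (fun ω => (kap κ n).map (fun l => ω :: l))

theorem kap_succ {Ω : Type*} (κ : BMean Ω) (n : ℕ) (Φ : List Ω → ℝ) :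
    (kap κ (n + 1)).I Φ = κ.I (fun ω => (kap κ n).I (fun l => Φ (ω :: l))) := rfl

theorem avg_eq_kap (l : List W) (f : List W → ℝ) :
    avg κ X l f = (kap κ l.length).I (fun ωs => f (List.zipWith (fun w ω => w * X ω) l ωs)) := by
  induction l generalizing f with
  | nil => rfl
  | cons a l ih => simp only [avg, ih, List.length_cons, kap_succ, List.zipWith_cons_cons]

end ListCochains

section LLN

variable {S : Type*} [Fintype S] [Nonempty S] [DecidableEq S]

/-- Product density. -/
noncomputable def DD : List (ZZ S) → List (ZZ S × ℕ) → ℝ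
  | [], _ => 1
  | _ :: _, [] => 0
  | u :: us, ω :: ωs => DU u ω.1 * DD us ωs

noncomputable def CC (us : List (ZZ S)) : ℝ := (us.map cU).prod

theorem cU_nonneg (u : ZZ S) : 0 ≤ cU u := (DU_nonneg u 0).trans (DU_le u 0)

theorem CC_nonneg (us : List (ZZ S)) : 0 ≤ CC us := by
  induction us with
  | nil => simp [CC]
  | cons u us ih =>
    simp only [CC, List.map_cons, List.prod_cons] at *
    exact mul_nonneg (cU_nonneg u) ih

theorem DD_nonneg (us : List (ZZ S)) (ωs : List (ZZ S × ℕ)) : 0 ≤ DD us ωs := by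
  induction us generalizing ωs with
  | nil => simp [DD]
  | cons u us ih =>
    cases ωs with
    | nil => simp [DD]
    | cons ω ωs => exact mul_nonneg (DU_nonneg _ _) (ih _)

theorem DD_le (us : List (ZZ S)) (ωs : List (ZZ S × ℕ)) : DD us ωs ≤ CC us := by
  induction us generalizing ωs with
  | nil => simp [DD, CC]
  | cons u us ih =>
    cases ωs with
    | nil => simp only [DD]; exact CC_nonneg _
    | cons ω ωs =>
      have : CC (u :: us) = cU u * CC us := by simp [CC]
      rw [this]
      exact mul_le_mul (DU_le _ _) (ih _) (DD_nonneg _ _) (cU_nonneg _)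

theorem DD_abs (us : List (ZZ S)) (ωs : List (ZZ S × ℕ)) : |DD us ωs| ≤ CC us := by
  rw [abs_of_nonneg (DD_nonneg _ _)]; exact DD_le _ _

/-- Left translation of a list of configurations. -/
noncomputable def trn (us : List (ZZ S)) (ωs : List (ZZ S × ℕ)) : List (ZZ S × ℕ) :=
  List.zipWith (fun u ω => (u + ω.1, ω.2)) us ωs

theorem kap_dens (us : List (ZZ S)) {Φ : List (ZZ S × ℕ) → ℝ} {C : ℝ} (hΦ : ∀ z, |Φ z| ≤ C) :
    (kap (kappa S) us.length).I (fun ωs => Φ (trn us ωs)) =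
      (kap (kappa S) us.length).I (fun ωs => Φ ωs * DD us ωs) := by
  have hC : 0 ≤ C := (abs_nonneg _).trans (hΦ [])
  induction us generalizing Φ with
  | nil => simp [kap, BMean.dirac_I, trn, DD]
  | cons u us ih =>
    simp only [List.length_cons, kap_succ, trn, List.zipWith_cons_cons, DD]
    have e1 : ∀ ω : ZZ S × ℕ, (kap (kappa S) us.length).I (fun ωs => Φ ((u + ω.1, ω.2) ::
        List.zipWith (fun u ω => (u + ω.1, ω.2)) us ωs)) =
        (kap (kappa S) us.length).I (fun ωs => Φ ((u + ω.1, ω.2) :: ωs) * DD us ωs) := fun ω =>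
      ih (Φ := fun ωs => Φ ((u + ω.1, ω.2) :: ωs)) (fun z => hΦ _)
    simp only [e1]
    have := kappa_dens u (C := C * CC us)
      (Φ := fun ω => (kap (kappa S) us.length).I (fun ωs => Φ (ω :: ωs) * DD us ωs))
      (fun ω => BMean.bound _ (fun ωs => by
        rw [abs_mul]
        exact mul_le_mul (hΦ _) (DD_abs _ _) (abs_nonneg _) hC))
    rw [this]
    congr 1
    ext ω
    rw [← BMean.mulc]
    congr 1
    ext ωs
    ring

/-- Coordinatewise disjointness of supports. -/
def LD (us us' : List (ZZ S)) : Prop :=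
  List.Forall₂ (fun u u' => Disjoint u.support u'.support) us us'

theorem DD_trn {us us' : List (ZZ S)} (h : LD us us') (ωs : List (ZZ S × ℕ)) :
    DD us' (trn us ωs) = DD us' ωs := by
  unfold LD at h
  induction h generalizing ωs with
  | nil => simp [DD]
  | cons h1 h2 ih =>
    cases ωs with
    | nil => simp [trn]
    | cons ω ωs =>
      have := ih ωs
      simp only [trn] at this
      simp only [trn, List.zipWith_cons_cons, DD, this, DU_add_of_disjoint h1]

theorem kap_DD (us : List (ZZ S)) : (kap (kappa S) us.length).I (DD us) = 1 := by
  have := kap_dens us (Φ := fun _ => 1) (C := 1) (by simp)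
  simp only [one_mul, BMean.const] at this
  exact this.symm

theorem kap_DD_mul {us us' : List (ZZ S)} (h : LD us us') :
    (kap (kappa S) us.length).I (fun ωs => DD us ωs * DD us' ωs) = 1 := by
  have h1 := kap_dens us (Φ := DD us') (DD_abs us')
  simp only [DD_trn h] at h1
  have hl : us.length = us'.length := List.Forall₂.length_eq h
  have h2 := kap_DD us'
  rw [← hl] at h2
  have h3 : (kap (kappa S) us.length).I (fun ωs => DD us' ωs) = 1 := h2
  rw [h3] at h1
  simp only [mul_comm (DD us _)]
  exact h1.symm

theorem lln {ι : Type*} (J : Finset ι) (n : ℕ) (us : ι → List (ZZ S)) (hn : ∀ j, (us j).length = n)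
    (hd : ∀ i ∈ J, ∀ j ∈ J, i ≠ j → LD (us i) (us j)) {D : ℝ} (hD : ∀ j, CC (us j) ≤ D)
    {Φ : List (ZZ S × ℕ) → ℝ} {C : ℝ} (hΦ : ∀ z, |Φ z| ≤ C) {η : ℝ} (hη : 0 < η)
    (hK : (D + 1) ^ 2 ≤ J.card * η ^ 2) (hJ : 0 < J.card) :
    |∑ j ∈ J, (kap (kappa S) n).I (fun ωs => Φ (trn (us j) ωs)) -
      J.card * (kap (kappa S) n).I Φ| ≤ C * η * J.card := by
  classical
  have hC : 0 ≤ C := (abs_nonneg _).trans (hΦ [])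
  set m := kap (kappa S) n with hm
  set K : ℝ := (J.card : ℝ) with hKdef
  have hK0 : 0 < K := by rw [hKdef]; exact_mod_cast hJ
  have e1 : ∀ j, m.I (fun ωs => Φ (trn (us j) ωs)) = m.I (fun ωs => Φ ωs * DD (us j) ωs) := by
    intro j
    have := kap_dens (us j) hΦ
    rw [hn j] at this
    exact this
  have hone : ∀ j, m.I (DD (us j)) = 1 := by
    intro j
    have := kap_DD (us j)
    rw [hn j] at this
    exact this
  have hmul : ∀ i ∈ J, ∀ j ∈ J, i ≠ j → m.I (fun ωs => DD (us i) ωs * DD (us j) ωs) = 1 := by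
    intro i hi j hj hij
    have := kap_DD_mul (hd i hi j hj hij)
    rw [hn i] at this
    exact this
  set Y : List (ZZ S × ℕ) → ℝ := fun ωs => ∑ j ∈ J, (DD (us j) ωs - 1) with hY
  have e2 : ∑ j ∈ J, m.I (fun ωs => Φ (trn (us j) ωs)) - K * m.I Φ = m.I (fun ωs => Φ ωs * Y ωs) := by
    simp only [e1]
    rw [← m.sumf, mul_comm, ← m.mulc, ← m.subf]
    congr 1
    ext ωs
    rw [hY]
    simp only [Finset.sum_sub_distrib, Finset.mul_sum, mul_sub]
    simp [hKdef]
    ring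
  have hDJ : ∀ j ωs, |DD (us j) ωs - 1| ≤ D + 1 := by
    intro j ωs
    have h1 := DD_nonneg (us j) ωs
    have h2 := (DD_le (us j) ωs).trans (hD j)
    rw [abs_le]; constructor <;> linarith
  have hYb : ∀ ωs, |Y ωs| ≤ K * (D + 1) := by
    intro ωs
    refine (Finset.abs_sum_le_sum_abs _ _).trans ?_
    refine (Finset.sum_le_sum (fun i _ => hDJ i ωs)).trans ?_
    rw [Finset.sum_const, nsmul_eq_mul]
  have hD1 : 0 ≤ D + 1 := by
    obtain ⟨j, -⟩ := Finset.card_pos.1 hJ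
    exact (abs_nonneg _).trans (hDJ j [])
  have hY2 : m.I (fun ωs => Y ωs * Y ωs) ≤ K * (D + 1) ^ 2 := by
    have e3 : (fun ωs => Y ωs * Y ωs) =
        fun ωs => ∑ i ∈ J, ∑ j ∈ J, (DD (us i) ωs - 1) * (DD (us j) ωs - 1) := by
      ext ωs
      rw [hY]
      simp only [Finset.sum_mul_sum]
    rw [e3, m.sumf]
    have e4 : ∀ i ∈ J, m.I (fun ωs => ∑ j ∈ J, (DD (us i) ωs - 1) * (DD (us j) ωs - 1)) ≤ (D + 1) ^ 2 := by
      intro i hi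
      rw [m.sumf, Finset.sum_eq_single_of_mem i hi]
      · refine le_of_abs_le (m.bound (fun ωs => ?_))
        rw [abs_mul, ← sq]
        exact pow_le_pow_left₀ (abs_nonneg _) (hDJ i ωs) 2
      · intro j hj hji
        have e5 : (fun ωs => (DD (us i) ωs - 1) * (DD (us j) ωs - 1)) =
            fun ωs => DD (us i) ωs * DD (us j) ωs - (DD (us i) ωs + DD (us j) ωs - 1) := by
          ext ωs; ring
        rw [e5, m.subf, m.subf, m.addf, hmul i hi j hj (Ne.symm hji), m.const]
        have h1 : m.I (fun ωs => DD (us i) ωs) = 1 := hone i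
        have h2 : m.I (fun ωs => DD (us j) ωs) = 1 := hone j
        rw [h1, h2]; norm_num
    refine (Finset.sum_le_sum e4).trans ?_
    simp [hKdef]
  rw [e2]
  have hηK : 0 < η * K := mul_pos hη hK0
  have key : ∀ ωs, |Φ ωs * Y ωs| ≤ C * (η * K / 2) + (Y ωs * Y ωs) * (C / (2 * (η * K))) := by
    intro ωs
    rw [abs_mul]
    have h1 : |Y ωs| ≤ η * K / 2 + (Y ωs * Y ωs) / (2 * (η * K)) := by
      have h2 : 0 ≤ (|Y ωs| - η * K) ^ 2 := sq_nonneg _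
      have h3 : |Y ωs| * |Y ωs| = Y ωs * Y ωs := abs_mul_abs_self _
      rw [div_add_div _ _ (by norm_num) (by positivity), le_div_iff₀ (by positivity)]
      nlinarith
    calc |Φ ωs| * |Y ωs| ≤ C * (η * K / 2 + (Y ωs * Y ωs) / (2 * (η * K))) :=
          mul_le_mul (hΦ _) h1 (abs_nonneg _) hC
      _ = _ := by ring
  set B := K * (D + 1) with hB
  have hB0 : 0 ≤ B := by positivity
  have hYY : ∀ ωs, Y ωs * Y ωs ≤ B * B := by
    intro ωs
    rw [← abs_mul_abs_self (Y ωs)]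
    exact mul_le_mul (hYb _) (hYb _) (abs_nonneg _) hB0
  have hbound_int : m.I (fun ωs => C * (η * K / 2) + (Y ωs * Y ωs) * (C / (2 * (η * K)))) ≤ C * η * K := by
    rw [m.addf, m.const, m.mulc]
    have h1 : m.I (fun ωs => Y ωs * Y ωs) * (C / (2 * (η * K))) ≤
        (K * (K * η ^ 2)) * (C / (2 * (η * K))) := by
      refine mul_le_mul_of_nonneg_right (hY2.trans ?_) (by positivity)
      exact mul_le_mul_of_nonneg_left hK hK0.le
    have h2 : (K * (K * η ^ 2)) * (C / (2 * (η * K))) = C * η * K / 2 := by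
      field_simp
    linarith
  set R := C * (η * K / 2) + (B * B) * (C / (2 * (η * K))) with hR
  have hr : ∀ ωs, |C * (η * K / 2) + (Y ωs * Y ωs) * (C / (2 * (η * K)))| ≤ R := by
    intro ωs
    rw [abs_of_nonneg ((abs_nonneg _).trans (key ωs)), hR]
    have := mul_le_mul_of_nonneg_right (hYY ωs) (show 0 ≤ C / (2 * (η * K)) by positivity)
    linarith
  have hl : ∀ ωs, |Φ ωs * Y ωs| ≤ R := fun ωs => (key ωs).trans ((le_abs_self _).trans (hr ωs))
  rw [abs_le]
  constructor
  · have := m.mono (f := fun ωs => -(Φ ωs * Y ωs)) R (fun x => by rw [abs_neg]; exact hl x) hr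
      (fun x => (neg_le_abs _).trans (key x))
    have h2 : m.I (fun ωs => -(Φ ωs * Y ωs)) = - m.I (fun ωs => Φ ωs * Y ωs) := map_neg m.I _
    rw [h2] at this
    linarith
  · exact (m.mono R hl hr (fun x => (le_abs_self _).trans (key x))).trans hbound_int

end LLN

section Dent

variable {V : Type*} [NormedAddCommGroup V] [NormedSpace ℝ V]

theorem dentable [CompleteSpace V] (hsep : TopologicalSpace.SeparableSpace (V →L[ℝ] ℝ))
    {ι : Type*} [Nonempty ι] (P : ι → (V →L[ℝ] ℝ)) {C : ℝ} (hP : ∀ i, ‖P i‖ ≤ C) {ε : ℝ} (hε : 0 < ε) :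
    ∃ (v : V) (η : ℝ) (x0 : V →L[ℝ] ℝ), 0 < η ∧
      ∀ i, (⨆ j, P j v) - η < P i v → ‖P i - x0‖ ≤ 2 * ε := by
  set p : V → ℝ := fun v => ⨆ j, P j v with hp
  have hPv : ∀ i v, |P i v| ≤ C * ‖v‖ := fun i v =>
    ((P i).le_opNorm v).trans (mul_le_mul_of_nonneg_right (hP i) (norm_nonneg v))
  have hbdd : ∀ v, BddAbove (Set.range (fun j => P j v)) := fun v =>
    ⟨C * ‖v‖, by rintro _ ⟨j, rfl⟩; exact le_of_abs_le (hPv j v)⟩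
  have hle : ∀ i v, P i v ≤ p v := fun i v => le_ciSup (hbdd v) i
  have hpC : ∀ v, p v ≤ C * ‖v‖ := fun v => ciSup_le fun i => le_of_abs_le (hPv i v)
  have hadd : ∀ v w, p (v + w) ≤ p v + p w := fun v w => ciSup_le fun i => by
    rw [map_add]; exact add_le_add (hle i v) (hle i w)
  have hsmul : ∀ c : ℝ, 0 < c → ∀ v, p (c • v) = c * p v := by
    intro c hc v
    simp only [hp, map_smul, smul_eq_mul]
    exact (Real.mul_iSup_of_nonneg hc.le _).symm
  have hp0 : p 0 = 0 := by simp [hp]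
  have hC : 0 ≤ C := (norm_nonneg _).trans (hP (Classical.arbitrary ι))
  have hlip : ∀ v w, p v - p w ≤ C * ‖v - w‖ := by
    intro v w
    have h1 := hadd (v - w) w
    rw [sub_add_cancel] at h1
    have := hpC (v - w)
    linarith
  have hcont : Continuous p := by
    refine (LipschitzWith.of_le_add_mul (Real.toNNReal C) (fun x y => ?_)).continuous
    have := hlip x y
    rw [Real.coe_toNNReal C hC, dist_eq_norm]; linarith
  let A : ℕ → Set V := fun i => {v | ∀ h : V, p v - p (v - h) ≤
    TopologicalSpace.denseSeq (V →L[ℝ] ℝ) i h + ε * ‖h‖}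
  have hA : ∀ i, IsClosed (A i) := by
    intro i
    simp only [A, Set.setOf_forall]
    refine isClosed_iInter fun h => isClosed_le ?_ continuous_const
    exact hcont.sub (hcont.comp (continuous_id.sub continuous_const))
  have hU : ⋃ i, A i = Set.univ := by
    rw [Set.eq_univ_iff_forall]
    intro v
    obtain ⟨g, hgv, hg⟩ : ∃ g : V →ₗ[ℝ] ℝ, g v = p v ∧ ∀ x, g x ≤ p x := by
      by_cases hv : v = 0
      · obtain ⟨g, -, hg⟩ := exists_extension_of_le_sublinear (⊥ : V →ₗ.[ℝ] ℝ) p hsmul hadd (by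
          rintro ⟨x, hx⟩
          have hx0 : x = 0 := (Submodule.mem_bot ℝ).1 hx
          subst hx0
          rw [hp0]
          exact le_of_eq (LinearPMap.map_zero _))
        exact ⟨g, by rw [hv, map_zero, hp0], hg⟩
      · obtain ⟨g, hg1, hg⟩ := exists_extension_of_le_sublinear
          (LinearPMap.mkSpanSingleton v (p v) hv : V →ₗ.[ℝ] ℝ) p hsmul hadd (by
          rintro ⟨x, hx⟩
          obtain ⟨c, rfl⟩ := Submodule.mem_span_singleton.1 hx
          erw [LinearPMap.mkSpanSingleton'_apply]
          simp only [smul_eq_mul, RingHom.id_apply]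
          rcases lt_trichotomy c 0 with hc | hc | hc
          · have h1 := hsmul (-c) (by linarith) (-v)
            rw [smul_neg, neg_smul, neg_neg] at h1
            rw [h1]
            have h2 := hadd v (-v)
            rw [add_neg_cancel, hp0] at h2
            nlinarith
          · simp [hc, hp0]
          · rw [hsmul c hc])
        refine ⟨g, ?_, hg⟩
        have := hg1 ⟨v, Submodule.mem_span_singleton_self v⟩
        rw [this]
        exact LinearPMap.mkSpanSingleton_apply ℝ ℝ hv (p v)
    have hgb : ∀ x, ‖g x‖ ≤ C * ‖x‖ := by
      intro x
      rw [Real.norm_eq_abs, abs_le]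
      have h1 := (hg x).trans (hpC x)
      have h2 := (hg (-x)).trans (hpC (-x))
      rw [map_neg, norm_neg] at h2
      constructor <;> linarith
    obtain ⟨i, hi⟩ := (TopologicalSpace.denseRange_denseSeq (V →L[ℝ] ℝ)).exists_dist_lt
      (g.mkContinuous C hgb) hε
    refine Set.mem_iUnion.2 ⟨i, fun h => ?_⟩
    have h1 := hg (v - h)
    rw [map_sub, hgv] at h1
    have h2 := ((g.mkContinuous C hgb) - TopologicalSpace.denseSeq (V →L[ℝ] ℝ) i).le_opNorm h
    rw [dist_eq_norm] at hi
    have h3 := h2.trans (mul_le_mul_of_nonneg_right hi.le (norm_nonneg h))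
    have h4 := le_of_abs_le h3
    simp only [ContinuousLinearMap.sub_apply, LinearMap.mkContinuous_apply] at h4
    linarith
  obtain ⟨i, v, hv⟩ := nonempty_interior_of_iUnion_of_closed hA hU
  obtain ⟨r, hr, hball⟩ := Metric.mem_nhds_iff.1 (mem_interior_iff_mem_nhds.1 hv)
  set x0 := TopologicalSpace.denseSeq (V →L[ℝ] ℝ) i with hx0
  set s := r / 2 with hs
  have hs0 : 0 < s := by positivity
  refine ⟨v, s * ε, x0, by positivity, fun j hj => ?_⟩
  have key : ∀ h : V, ‖h‖ = 1 → (P j - x0) h ≤ 2 * ε := by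
    intro h hh
    have hm : v + s • h ∈ A i := hball (by
      rw [Metric.mem_ball, dist_eq_norm, add_sub_cancel_left, norm_smul, hh, mul_one,
        Real.norm_eq_abs, abs_of_pos hs0]
      linarith)
    have h1 := hm (s • h)
    rw [add_sub_cancel_right, norm_smul, hh, Real.norm_eq_abs, abs_of_pos hs0] at h1
    have h2 := hle j (v + s • h)
    rw [map_add] at h2
    simp only [map_smul, smul_eq_mul] at h1 h2
    have h3 : s * ((P j - x0) h) ≤ s * (2 * ε) := by
      simp only [ContinuousLinearMap.sub_apply]
      have : p v - s * ε < P j v := hj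
      have h1' : p (v + s • h) - p v ≤ s * x0 h + ε * (s * 1) := h1
      nlinarith
    exact le_of_mul_le_mul_left h3 hs0
  refine ContinuousLinearMap.opNorm_le_of_unit_norm (by positivity) fun h hh => ?_
  rw [Real.norm_eq_abs, abs_le]
  have h1 := key h hh
  have h2 := key (-h) (by rw [norm_neg, hh])
  rw [map_neg] at h2
  constructor <;> linarith

end Dent

section Constancy

variable {S : Type*} [Fintype S] [Nonempty S] [DecidableEq S]

/-- Coordinatewise sum of lists of configurations. -/
noncomputable def ladd {S : Type*} (us us' : List (ZZ S)) : List (ZZ S) :=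
  List.zipWith (fun u u' => u + u') us us'

theorem ladd_length (us us' : List (ZZ S)) (n : ℕ) (h : us.length = n) (h' : us'.length = n) :
    (ladd us us').length = n := by
  simp [ladd, h, h']

theorem trn_ladd (us us' : List (ZZ S)) (ωs : List (ZZ S × ℕ)) :
    trn (ladd us us') ωs = trn us (trn us' ωs) := by
  induction us generalizing us' ωs with
  | nil => simp [trn, ladd]
  | cons u us ih =>
    cases us' with
    | nil => simp [trn, ladd]
    | cons u' us' =>
      cases ωs with
      | nil => simp [trn, ladd]
      | cons ω ωs =>
        have := ih us' ωs
        simp only [trn, ladd] at this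
        simp only [trn, ladd, List.zipWith_cons_cons, this, add_assoc]

theorem shZ_add (j : ℤ) (u u' : ZZ S) : shZ j (u + u') = shZ j u + shZ j u' := by
  ext1 i
  simp only [shZ_apply, Finsupp.add_apply]

theorem shZ_neg (j : ℤ) (u : ZZ S) : shZ (-j) (shZ j u) = u := by
  ext1 i
  simp only [shZ_apply]
  congr 1
  ring

theorem ladd_map (j : ℤ) (us us' : List (ZZ S)) :
    (ladd us us').map (shZ j) = ladd (us.map (shZ j)) (us'.map (shZ j)) := by
  induction us generalizing us' with
  | nil => simp [ladd]
  | cons u us ih =>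
    cases us' with
    | nil => simp [ladd]
    | cons u' us' =>
      have := ih us'
      simp only [ladd] at this
      simp only [ladd, List.zipWith_cons_cons, List.map_cons, this, shZ_add]

theorem map_shZ_neg (j : ℤ) (us : List (ZZ S)) : (us.map (shZ j)).map (shZ (-j)) = us := by
  simp [List.map_map, Function.comp_def, shZ_neg]

theorem add_comm_disj {u u' : ZZ S} (h : Disjoint u.support u'.support) : u + u' = u' + u := by
  ext1 i
  simp only [Finsupp.add_apply]
  by_cases hi : u i = 0
  · simp [hi]
  · have : u' i = 0 := Finsupp.notMem_support_iff.1 (Finset.disjoint_left.1 h (Finsupp.mem_support_iff.2 hi))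
    simp [this]

theorem ladd_comm {us us' : List (ZZ S)} (h : LD us us') : ladd us us' = ladd us' us := by
  unfold LD at h
  induction h with
  | nil => rfl
  | cons h1 h2 ih =>
    simp only [ladd] at ih
    simp only [ladd, List.zipWith_cons_cons, ih, add_comm_disj h1]

theorem ladd_zero (us : List (ZZ S)) : ladd (List.replicate us.length 0) us = us := by
  induction us with
  | nil => rfl
  | cons u us ih =>
    simp only [ladd] at ih
    simp only [ladd, List.length_cons, List.replicate_succ, List.zipWith_cons_cons, ih, zero_add]

theorem CC_shZ (j : ℤ) (us : List (ZZ S)) : CC (us.map (shZ j)) = CC us := by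
  simp [CC, List.map_map, Function.comp_def, cU_shZ]

/-- All supports are contained in `[-N,N]`. -/
def SB {S : Type*} (N : ℕ) (us : List (ZZ S)) : Prop := ∀ u ∈ us, ∀ i ∈ u.support, |i| ≤ N

theorem exists_SB (us : List (ZZ S)) : ∃ N, SB N us := by
  induction us with
  | nil => exact ⟨0, by simp [SB]⟩
  | cons u us ih =>
    obtain ⟨N, hN⟩ := ih
    refine ⟨N + ∑ i ∈ u.support, i.natAbs, fun w hw i hi => ?_⟩
    rcases List.mem_cons.1 hw with rfl | hw
    · rw [Int.abs_eq_natAbs]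
      have := Finset.single_le_sum (f := fun i : ℤ => i.natAbs) (fun _ _ => Nat.zero_le _) hi
      push_cast
      have h2 : ((i.natAbs : ℕ) : ℤ) ≤ ((∑ i ∈ w.support, i.natAbs : ℕ) : ℤ) := by exact_mod_cast this
      push_cast at h2
      omega
    · have := hN w hw i hi
      push_cast
      have : (0 : ℤ) ≤ ∑ i ∈ u.support, |i| := Finset.sum_nonneg fun i _ => abs_nonneg i
      omega

theorem SB_mono {N M : ℕ} (h : N ≤ M) {us : List (ZZ S)} (hN : SB N us) : SB M us :=
  fun u hu i hi => (hN u hu i hi).trans (by exact_mod_cast h)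

theorem LD_shift {N : ℕ} {us us' : List (ZZ S)} (hN : SB N us) (hN' : SB N us')
    (hl : us.length = us'.length) {a b : ℤ} (hab : 2 * (N : ℤ) < |a - b|) :
    LD (us.map (shZ a)) (us'.map (shZ b)) := by
  unfold LD
  rw [List.forall₂_map_left_iff, List.forall₂_map_right_iff, List.forall₂_iff_zip]
  refine ⟨hl, fun {u u'} h => ?_⟩
  have h1 := List.of_mem_zip h
  rw [Finset.disjoint_left]
  intro i hi hi'
  rw [Finsupp.mem_support_iff, shZ_apply] at hi hi'
  have h2 := hN u h1.1 (i - a) (Finsupp.mem_support_iff.2 hi)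
  have h3 := hN' u' h1.2 (i - b) (Finsupp.mem_support_iff.2 hi')
  have h4 : |a - b| ≤ |i - b| + |i - a| := by
    have : a - b = (i - b) - (i - a) := by ring
    rw [this]; exact abs_sub _ _
  omega

variable {V : Type*} [NormedAddCommGroup V] [NormedSpace ℝ V]

theorem constancy [CompleteSpace V] (hsep : TopologicalSpace.SeparableSpace (V →L[ℝ] ℝ))
    (n : ℕ) (Ψ : List (ZZ S) → (V →L[ℝ] ℝ)) (Φ : V → List (ZZ S × ℕ) → ℝ) (C : ℝ)
    (hΦ : ∀ v ωs, |Φ v ωs| ≤ C * ‖v‖)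
    (hΨ : ∀ us, us.length = n → ∀ v, Ψ us v = (kap (kappa S) n).I (fun ωs => Φ v (trn us ωs)))
    (T : ℤ → V ≃ₗᵢ[ℝ] V)
    (hT : ∀ j us v, us.length = n → Ψ (us.map (shZ j)) (T j v) = Ψ us v)
    (us : List (ZZ S)) (hus : us.length = n) : Ψ us = Ψ (List.replicate n 0) := by
  wlog hC : 0 ≤ C generalizing C
  · refine this |C| (fun v ωs => (hΦ v ωs).trans ?_) (abs_nonneg _)
    exact mul_le_mul_of_nonneg_right (le_abs_self C) (norm_nonneg v)
  -- law of large numbers for `Ψ`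
  have L : ∀ (J : Finset ℕ) (base : List (ZZ S)) (fam : ℕ → List (ZZ S)), base.length = n →
      (∀ j, (fam j).length = n) → (∀ i ∈ J, ∀ j ∈ J, i ≠ j → LD (fam i) (fam j)) →
      ∀ D : ℝ, (∀ j, CC (fam j) ≤ D) → ∀ η : ℝ, 0 < η → (D + 1) ^ 2 ≤ J.card * η ^ 2 → 0 < J.card →
      ∀ v, |∑ j ∈ J, Ψ (ladd base (fam j)) v - J.card * Ψ base v| ≤ C * ‖v‖ * η * J.card := by
    intro J base fam hb hf hd D hD η hη hK hJ v
    have := lln J n fam hf hd hD (Φ := fun ωs => Φ v (trn base ωs)) (fun z => hΦ v _) hη hK hJ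
    rw [hΨ base hb]
    have e : ∀ j, Ψ (ladd base (fam j)) v =
        (kap (kappa S) n).I (fun ωs => Φ v (trn base (trn (fam j) ωs))) := by
      intro j
      rw [hΨ _ (ladd_length _ _ n hb (hf j))]
      simp only [trn_ladd]
    simp only [e]
    exact this
  have hΨn : ∀ us, us.length = n → ‖Ψ us‖ ≤ C := fun us h =>
    ContinuousLinearMap.opNorm_le_bound _ hC fun v => by
      rw [hΨ us h v]; exact BMean.bound _ (fun ωs => hΦ v _)
  have main : ∀ v' : V, ∀ ε : ℝ, 0 < ε →
      |Ψ us v' - Ψ (List.replicate n 0) v'| ≤ ε * ((4 + 6 * C) * ‖v'‖) := by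
    intro v' ε hε
    let ι := {l : List (ZZ S) // l.length = n}
    haveI : Nonempty ι := ⟨⟨us, hus⟩⟩
    obtain ⟨v, η, x0, hη, hsl⟩ := dentable hsep (fun l : ι => Ψ l.1) (fun l => hΨn l.1 l.2) hε
    set p : ℝ := ⨆ j : ι, Ψ j.1 v with hp
    have hbdd : BddAbove (Set.range (fun j : ι => Ψ j.1 v)) :=
      ⟨C * ‖v‖, by
        rintro _ ⟨j, rfl⟩
        refine le_of_abs_le ?_
        show |Ψ j.1 v| ≤ _
        rw [hΨ j.1 j.2]; exact BMean.bound _ (fun ωs => hΦ v _)⟩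
    have hle : ∀ l, l.length = n → Ψ l v ≤ p := fun l hl => le_ciSup hbdd (⟨l, hl⟩ : ι)
    set δ := η * min 1 ε with hδ
    have hδ0 : 0 < δ := by positivity
    have hδη : δ ≤ η := by
      rw [hδ]
      exact mul_le_of_le_one_right hη.le (min_le_left _ _)
    have hδε : δ ≤ η * ε := mul_le_mul_of_nonneg_left (min_le_right _ _) hη.le
    obtain ⟨⟨us0, hus0⟩, h0⟩ := exists_lt_of_lt_ciSup (show p - δ < ⨆ j : ι, Ψ j.1 v by linarith)
    simp only at h0
    obtain ⟨N1, hN1⟩ := exists_SB us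
    obtain ⟨N2, hN2⟩ := exists_SB us0
    set N := max N1 N2 with hN
    have hNu : SB N us := SB_mono (le_max_left _ _) hN1
    have hNu0 : SB N us0 := SB_mono (le_max_right _ _) hN2
    set η' := min ε (δ / (C * ‖v‖ + 1)) with hη'
    have hη'0 : 0 < η' := by positivity
    have hCv : C * ‖v‖ * η' ≤ δ := by
      have h1 : η' ≤ δ / (C * ‖v‖ + 1) := min_le_right _ _
      rw [le_div_iff₀ (by positivity)] at h1
      nlinarith
    set D := CC us + CC us0 with hD
    obtain ⟨K, hK⟩ := exists_nat_gt ((D + 1) ^ 2 / η' ^ 2)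
    have hKpos : (0 : ℝ) < K := lt_of_le_of_lt (by positivity) hK
    have hKD : (D + 1) ^ 2 ≤ K * η' ^ 2 := by
      rw [div_lt_iff₀ (by positivity)] at hK
      exact hK.le
    set J := Finset.range K with hJ
    have hcard : J.card = K := by simp [hJ]
    have hcardpos : 0 < J.card := by rw [hcard]; exact_mod_cast hKpos
    have hKD' : (D + 1) ^ 2 ≤ J.card * η' ^ 2 := by rw [hcard]; exact hKD
    let s : ℕ → ℤ := fun i => (2 * (N : ℤ) + 1) * (i + 1)
    have hs : ∀ i : ℕ, 2 * (N : ℤ) < s i := by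
      intro i
      have : (0 : ℤ) ≤ (2 * (N : ℤ) + 1) * i := by positivity
      simp only [s, mul_add]
      omega
    have hss : ∀ i j : ℕ, i ≠ j → 2 * (N : ℤ) < |s i - s j| := by
      intro i j hij
      have h1 : s i - s j = (2 * (N : ℤ) + 1) * ((i : ℤ) - j) := by simp only [s]; ring
      have h2 : 1 ≤ |(i : ℤ) - j| := Int.one_le_abs (by omega)
      rw [h1, abs_mul, abs_of_pos (by positivity : (0 : ℤ) < 2 * (N : ℤ) + 1)]
      nlinarith
    have hCu : CC us ≤ D := by have := CC_nonneg us0; linarith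
    have hCu0 : CC us0 ≤ D := by have := CC_nonneg us; linarith
    have L1 := L J us0 (fun j => us.map (shZ (s j))) hus0 (fun j => by simp [hus])
      (fun i _ j _ hij => LD_shift hNu hNu rfl (hss i j hij)) D
      (fun j => by rw [CC_shZ]; exact hCu) η' hη'0 hKD' hcardpos v
    have hfam : ∀ i ∈ J, ∀ j ∈ J, i ≠ j → LD (us0.map (shZ (-s i))) (us0.map (shZ (-s j))) :=
      fun i _ j _ hij => LD_shift hNu0 hNu0 rfl (by
        have := hss i j hij
        rwa [show - s i - - s j = -(s i - s j) by ring, abs_neg])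
    have hfD : ∀ j : ℕ, CC (us0.map (shZ (-s j))) ≤ D := fun j => by rw [CC_shZ]; exact hCu0
    have L2 := L J us (fun j => us0.map (shZ (- s j))) hus (fun j => by simp [hus0])
      hfam D hfD η' hη'0 hKD' hcardpos v'
    have L3 := L J (List.replicate n 0) (fun j => us0.map (shZ (- s j))) (by simp)
      (fun j => by simp [hus0]) hfam D hfD η' hη'0 hKD' hcardpos v'
    rw [hcard] at L1 L2 L3
    have hlx : ∀ j, (ladd us0 (us.map (shZ (s j)))).length = n := fun j =>
      ladd_length _ _ n hus0 (by simp [hus])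
    -- norm estimate
    have hnorm : ∀ j, ‖Ψ (ladd us0 (us.map (shZ (s j)))) - Ψ us0‖ ≤
        4 * ε + (2 * C / η) * (p - Ψ (ladd us0 (us.map (shZ (s j)))) v) := by
      intro j
      have hq := hle _ (hlx j)
      by_cases hgood : p - η < Ψ (ladd us0 (us.map (shZ (s j)))) v
      · have h1 := hsl ⟨_, hlx j⟩ hgood
        have h2 := hsl ⟨us0, hus0⟩ (by show p - η < Ψ us0 v; linarith)
        simp only at h1 h2
        have h3 : ‖Ψ (ladd us0 (us.map (shZ (s j)))) - Ψ us0‖ ≤ 2 * ε + 2 * ε := by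
          rw [show Ψ (ladd us0 (us.map (shZ (s j)))) - Ψ us0 =
            (Ψ (ladd us0 (us.map (shZ (s j)))) - x0) - (Ψ us0 - x0) by abel]
          exact (norm_sub_le _ _).trans (add_le_add h1 h2)
        have h4 : 0 ≤ (2 * C / η) * (p - Ψ (ladd us0 (us.map (shZ (s j)))) v) :=
          mul_nonneg (by positivity) (by linarith)
        linarith
      · push Not at hgood
        have h3 : ‖Ψ (ladd us0 (us.map (shZ (s j)))) - Ψ us0‖ ≤ C + C :=
          (norm_sub_le _ _).trans (add_le_add (hΨn _ (hlx j)) (hΨn _ hus0))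
        have h4 : 2 * C ≤ (2 * C / η) * (p - Ψ (ladd us0 (us.map (shZ (s j)))) v) := by
          rw [div_mul_eq_mul_div, le_div_iff₀ hη]
          exact mul_le_mul_of_nonneg_left (by linarith) (by positivity)
        linarith
    have hsum : ∑ j ∈ J, ‖Ψ (ladd us0 (us.map (shZ (s j)))) - Ψ us0‖ ≤ (4 + 4 * C) * ε * K := by
      refine (Finset.sum_le_sum fun j _ => hnorm j).trans ?_
      simp only [Finset.sum_add_distrib, ← Finset.mul_sum, Finset.sum_sub_distrib]
      simp only [Finset.sum_const, hcard, nsmul_eq_mul]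
      have h1 := (abs_le.1 L1).1
      have h2 : (K : ℝ) * p - ∑ j ∈ J, Ψ (ladd us0 (us.map (shZ (s j)))) v ≤ 2 * δ * K := by
        have h3 : K * (p - δ) ≤ K * Ψ us0 v := mul_le_mul_of_nonneg_left h0.le hKpos.le
        have h4 := mul_le_mul_of_nonneg_right hCv hKpos.le
        linarith
      have h5 := mul_le_mul_of_nonneg_left h2 (show 0 ≤ 2 * C / η by positivity)
      have h6 : 2 * C / η * (2 * δ * K) ≤ 4 * C * ε * K := by
        rw [div_mul_eq_mul_div, div_le_iff₀ hη]
        have := mul_le_mul_of_nonneg_left hδε (show 0 ≤ 4 * C * K by positivity)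
        linarith
      linarith
    have htr : ∀ j, |Ψ (ladd us (us0.map (shZ (- s j)))) v' -
        Ψ (ladd (List.replicate n 0) (us0.map (shZ (- s j)))) v'| ≤
        ‖Ψ (ladd us0 (us.map (shZ (s j)))) - Ψ us0‖ * ‖v'‖ := by
      intro j
      have e1 : ladd us (us0.map (shZ (- s j))) = (ladd us0 (us.map (shZ (s j)))).map (shZ (- s j)) := by
        rw [ladd_map, map_shZ_neg]
        have h1 : LD (us.map (shZ 0)) (us0.map (shZ (- s j))) :=
          LD_shift hNu hNu0 (by rw [hus, hus0]) (by
            rw [zero_sub, neg_neg]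
            exact (hs j).trans_le (le_abs_self _))
        have h2 : us.map (shZ 0) = us := by
          conv_rhs => rw [← List.map_id us]
          refine List.map_congr_left fun u _ => ?_
          ext1 i
          simp [shZ_apply]
        rw [h2] at h1
        exact ladd_comm h1
      have e2 : ladd (List.replicate n 0) (us0.map (shZ (- s j))) = us0.map (shZ (- s j)) := by
        have := ladd_zero (us0.map (shZ (- s j)))
        rwa [List.length_map, hus0] at this
      obtain ⟨w, hw⟩ := (T (- s j)).surjective v'
      rw [e1, e2, ← hw, hT _ _ _ (hlx j), hT _ _ _ hus0, LinearIsometryEquiv.norm_map]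
      exact (Ψ (ladd us0 (us.map (shZ (s j)))) - Ψ us0).le_opNorm w
    have hdiff : |∑ j ∈ J, Ψ (ladd us (us0.map (shZ (- s j)))) v' -
        ∑ j ∈ J, Ψ (ladd (List.replicate n 0) (us0.map (shZ (- s j)))) v'| ≤
        (4 + 4 * C) * ε * K * ‖v'‖ := by
      rw [← Finset.sum_sub_distrib]
      refine (Finset.abs_sum_le_sum_abs _ _).trans ((Finset.sum_le_sum fun j _ => htr j).trans ?_)
      rw [← Finset.sum_mul]
      exact mul_le_mul_of_nonneg_right hsum (norm_nonneg _)
    have hη'ε : C * ‖v'‖ * η' * K ≤ C * ‖v'‖ * ε * K :=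
      mul_le_mul_of_nonneg_right (mul_le_mul_of_nonneg_left (min_le_left _ _) (by positivity)) hKpos.le
    have hfin : K * |Ψ us v' - Ψ (List.replicate n 0) v'| ≤ K * (ε * ((4 + 6 * C) * ‖v'‖)) := by
      rw [← abs_of_pos hKpos, ← abs_mul, abs_of_pos hKpos]
      have a1 := abs_le.1 L2
      have a2 := abs_le.1 L3
      have a3 := abs_le.1 hdiff
      rw [abs_le]
      constructor <;> linarith
    exact le_of_mul_le_mul_left hfin hKpos
  ext v'
  by_contra hne
  have hpos : 0 < |Ψ us v' - Ψ (List.replicate n 0) v'| := abs_pos.2 (sub_ne_zero.2 hne)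
  set M := (4 + 6 * C) * ‖v'‖ with hM
  have hM0 : 0 ≤ M := by positivity
  have := main v' (|Ψ us v' - Ψ (List.replicate n 0) v'| / (2 * (M + 1))) (by positivity)
  rw [div_mul_eq_mul_div, le_div_iff₀ (by positivity)] at this
  nlinarith

end Constancy

section Wreath

variable {S : Type*} [Fintype S] [Nonempty S] [DecidableEq S] {G : Type*} [Group G] (σ : S → G)

/-- Evaluation of a word. -/
def wd {S G : Type*} [Group G] (σ : S → G) (c : FreeAddMonoid S) : G :=
  ((FreeAddMonoid.toList c).map σ).prod

theorem wd_zero : wd σ 0 = 1 := by simp [wd]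

theorem wd_add (a b : FreeAddMonoid S) : wd σ (a + b) = wd σ a * wd σ b := by
  simp [wd]

theorem wd_of (a : S) : wd σ (FreeAddMonoid.of a) = σ a := by
  simp [wd]

/-- Evaluation of a configuration. -/
def ev {S G : Type*} [Group G] (σ : S → G) (u : ZZ S) : finSupp ℤ G :=
  ⟨fun i => wd σ (u i), by
    refine Set.Finite.subset u.support.finite_toSet fun i hi => ?_
    rw [Function.mem_mulSupport] at hi
    rw [Finset.mem_coe, Finsupp.mem_support_iff]
    intro h
    exact hi (by rw [h]; simp [wd])⟩

theorem ev_zero : ev σ 0 = 1 := by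
  ext i
  exact wd_zero σ

theorem ev_add (u u' : ZZ S) : ev σ (u + u') = ev σ u * ev σ u' := by
  ext i
  exact wd_add σ (u i) (u' i)

/-- The generator of the cyclic factor. -/
def tau (G : Type*) [Group G] (j : ℤ) : WreathZ G := SemidirectProduct.inr (Multiplicative.ofAdd j)

/-- The base element of a configuration. -/
def bs {S G : Type*} [Group G] (σ : S → G) (u : ZZ S) : WreathZ G := SemidirectProduct.inl (ev σ u)

theorem tau_add (i j : ℤ) : tau G (i + j) = tau G i * tau G j := by
  simp [tau, ofAdd_add]

theorem tau_zero : tau G 0 = 1 := by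
  simp [tau]

theorem bs_zero : bs σ 0 = 1 := by simp [bs, ev_zero]

theorem bs_add (u u' : ZZ S) : bs σ (u + u') = bs σ u * bs σ u' := by
  simp [bs, ev_add]

theorem bs_shZ (j : ℤ) (u : ZZ S) : bs σ (shZ j u) * tau G j = tau G j * bs σ u := by
  have h : ev σ (shZ j u) = shiftHom G (Multiplicative.ofAdd j) (ev σ u) := by
    ext i
    show wd σ (shZ j u i) = wd σ (u (i - j))
    rw [shZ_apply]
  unfold bs tau
  rw [h, SemidirectProduct.inl_aut]
  simp [mul_assoc]

/-- The random element. -/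
def XX {S G : Type*} [Group G] (σ : S → G) (ω : ZZ S × ℕ) : WreathZ G := bs σ ω.1 * tau G ω.2

theorem XX_shift (ω : ZZ S × ℕ) : XX σ (shZ 1 ω.1, ω.2 + 1) = tau G 1 * XX σ ω := by
  unfold XX
  push_cast
  rw [add_comm, tau_add, ← mul_assoc, bs_shZ, mul_assoc]

theorem kappa_tau_one {H : WreathZ G → ℝ} {C : ℝ} (hH : ∀ w, |H w| ≤ C) (w : WreathZ G) :
    (kappa S).I (fun ω => H (w * tau G 1 * XX σ ω)) = (kappa S).I (fun ω => H (w * XX σ ω)) := by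
  have := kappa_shift (S := S) (Φ := fun ω => H (w * XX σ ω)) (fun ω => hH _)
  simp only [XX_shift] at this
  simp only [mul_assoc]
  exact this

theorem kappa_tau {H : WreathZ G → ℝ} {C : ℝ} (hH : ∀ w, |H w| ≤ C) (k : ℤ) (w : WreathZ G) :
    (kappa S).I (fun ω => H (w * tau G k * XX σ ω)) = (kappa S).I (fun ω => H (w * XX σ ω)) := by
  induction k using Int.induction_on generalizing w with
  | zero => simp [tau_zero]
  | succ i ih =>
    rw [tau_add]
    have := kappa_tau_one σ hH (w * tau G i)
    simp only [← mul_assoc] at this ⊢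
    rw [this]
    simpa only [mul_assoc] using ih w
  | pred i ih =>
    have := kappa_tau_one σ hH (w * tau G (-(i : ℤ) - 1))
    rw [← this]
    rw [mul_assoc w, ← tau_add, sub_add_cancel]
    exact ih w

theorem avg_right {l l' : List (WreathZ G)}
    (h : List.Forall₂ (fun w w' => ∃ k, w = w' * tau G k) l l') {f : List (WreathZ G) → ℝ} {C : ℝ}
    (hf : ∀ l, |f l| ≤ C) : avg (kappa S) (XX σ) l f = avg (kappa S) (XX σ) l' f := by
  induction h generalizing f with
  | nil => rfl
  | @cons w w' l l' h1 h2 ih =>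
    obtain ⟨k, rfl⟩ := h1
    simp only [avg]
    rw [← kappa_tau σ (H := fun w => avg (kappa S) (XX σ) l' (fun l'' => f (w :: l''))) (C := C)
      (fun w => avg_bound _ _ _ (fun _ => hf _)) k w']
    congr 1
    ext ω
    exact ih (fun _ => hf _)

variable {V : Type*} [NormedAddCommGroup V] [NormedSpace ℝ V]

/-- Equivariant bounded cochains on lists. -/
structure EC (ρ : WreathZ G →* (V ≃ₗᵢ[ℝ] V)) (f : V → List (WreathZ G) → ℝ) (C : ℝ) : Prop where
  bd : ∀ v l, |f v l| ≤ C * ‖v‖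
  add : ∀ v w l, f (v + w) l = f v l + f w l
  smul : ∀ (c : ℝ) v l, f (c • v) l = c * f v l
  equi : ∀ g v l, f (ρ g v) (l.map (fun w => g * w)) = f v l

theorem zip_XX (us : List (ZZ S)) (ωs : List (ZZ S × ℕ)) :
    List.zipWith (fun w ω => w * XX σ ω) (us.map (bs σ)) ωs = (trn us ωs).map (XX σ) := by
  induction us generalizing ωs with
  | nil => simp [trn]
  | cons u us ih =>
    cases ωs with
    | nil => simp [trn]
    | cons ω ωs =>
      have := ih ωs
      simp only [trn] at this
      simp only [trn, List.map_cons, List.zipWith_cons_cons, this]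
      simp only [XX, bs_add, mul_assoc]

theorem avg_const [CompleteSpace V] (hsep : TopologicalSpace.SeparableSpace (V →L[ℝ] ℝ))
    {ρ : WreathZ G →* (V ≃ₗᵢ[ℝ] V)} {f : V → List (WreathZ G) → ℝ} {C : ℝ} (hf : EC ρ f C)
    (l : List (WreathZ G)) (hl : ∀ w ∈ l, ∃ u k, w = bs σ u * tau G k) (v : V) :
    avg (kappa S) (XX σ) l (f v) = avg (kappa S) (XX σ) (List.replicate l.length 1) (f v) := by
  obtain ⟨us, hus⟩ : ∃ us : List (ZZ S), List.Forall₂ (fun w u => ∃ k, w = bs σ u * tau G k) l us := by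
    clear v
    induction l with
    | nil => exact ⟨[], List.Forall₂.nil⟩
    | cons w l ih =>
      obtain ⟨us, h⟩ := ih (fun w hw => hl w (List.mem_cons_of_mem _ hw))
      obtain ⟨u, k, hk⟩ := hl w List.mem_cons_self
      exact ⟨u :: us, List.Forall₂.cons ⟨k, hk⟩ h⟩
  have hlen : l.length = us.length := hus.length_eq
  rw [avg_right σ (l := l) (l' := us.map (bs σ)) (by rwa [List.forall₂_map_right_iff]) (hf.bd v)]
  let Ψ : List (ZZ S) → (V →L[ℝ] ℝ) := fun us => LinearMap.mkContinuous
    { toFun := fun v => avg (kappa S) (XX σ) (us.map (bs σ)) (f v)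
      map_add' := fun v w => by
        rw [← avg_add]; congr 1; ext l; exact hf.add v w l
      map_smul' := fun c v => by
        simp only [RingHom.id_apply, smul_eq_mul]
        rw [← avg_smul]; congr 1; ext l; exact hf.smul c v l } C
    (fun v => avg_bound _ _ _ (hf.bd v))
  have hΨ : ∀ us v, Ψ us v = avg (kappa S) (XX σ) (us.map (bs σ)) (f v) := fun us v => rfl
  have := constancy hsep us.length Ψ (fun v ωs => f v (ωs.map (XX σ))) C (fun v ωs => hf.bd v _)
    (fun us' h v => by
      rw [hΨ, avg_eq_kap, List.length_map, h]
      simp only [zip_XX])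
    (fun j => ρ (tau G j))
    (fun j us' v h => by
      rw [hΨ, hΨ]
      rw [avg_right σ (l := (us'.map (shZ j)).map (bs σ))
        (l' := (us'.map (bs σ)).map (fun w => tau G j * w)) (C := C * ‖ρ (tau G j) v‖) ?_ (hf.bd _)]
      · rw [avg_map]
        congr 1
        ext l
        exact hf.equi _ v l
      · rw [List.map_map, List.map_map, List.forall₂_map_left_iff, List.forall₂_map_right_iff,
          List.forall₂_same]
        intro u _
        refine ⟨-j, ?_⟩
        simp only [Function.comp]
        rw [← bs_shZ, mul_assoc, ← tau_add, add_neg_cancel, tau_zero, mul_one])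
    us rfl
  have h2 := congrArg (fun x => x v) this
  simp only [hΨ] at h2
  rw [h2, List.map_replicate, bs_zero, hlen]

theorem exists_bs (w : WreathZ G) (hw : ∀ i, ∃ a, σ a = (w.left : ℤ → G) i) :
    ∃ (u : ZZ S) (k : ℤ), w = bs σ u * tau G k := by
  classical
  choose a ha using hw
  have hfin : (Function.mulSupport (w.left : ℤ → G)).Finite := w.left.2
  refine ⟨Finsupp.onFinset hfin.toFinset (fun i => if (w.left : ℤ → G) i = 1 then 0 else
    FreeAddMonoid.of (a i)) (fun i hi => ?_), w.right.toAdd, ?_⟩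
  · rw [Set.Finite.mem_toFinset, Function.mem_mulSupport]
    intro h
    exact hi (by simp [h])
  · have h1 : ev σ (Finsupp.onFinset hfin.toFinset (fun i => if (w.left : ℤ → G) i = 1 then 0 else
        FreeAddMonoid.of (a i)) (fun i hi => by
          rw [Set.Finite.mem_toFinset, Function.mem_mulSupport]
          intro h
          exact hi (by simp [h]))) = w.left := by
      ext i
      show wd σ (if (w.left : ℤ → G) i = 1 then 0 else FreeAddMonoid.of (a i)) = _
      split_ifs with h
      · rw [h, wd_zero]
      · rw [wd_of, ha]
    unfold bs tau
    rw [h1]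
    simp

end Wreath

section Homogeneous

theorem dl_ofFn {W : Type*} (m : ℕ) (x : Fin (m + 1) → W) (h : List W → ℝ) :
    dl (List.ofFn x) h =
      ∑ i : Fin (m + 1), (-1 : ℝ) ^ (i : ℕ) * h (List.ofFn (fun j => x (i.succAbove j))) := by
  induction m generalizing h with
  | zero => simp [dl]
  | succ m ih =>
    rw [List.ofFn_succ, dl, ih, Fin.sum_univ_succ (n := m + 1), sub_eq_add_neg, ← Finset.sum_neg_distrib]
    congr 1
    · simp
    · refine Finset.sum_congr rfl fun i _ => ?_
      rw [List.ofFn_succ (f := fun j => x (i.succ.succAbove j))]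
      simp only [Fin.succ_succAbove_zero, Fin.succ_succAbove_succ, Fin.val_succ, pow_succ]
      ring

theorem dl_const {W : Type*} (l : List W) (c : ℝ) :
    dl l (fun _ => c) = if Odd l.length then c else 0 := by
  induction l with
  | nil => simp [dl]
  | cons a l ih =>
    simp only [dl, ih, List.length_cons, Nat.odd_add_one]
    by_cases h : Odd l.length <;> simp [h]

theorem dl_replicate {W : Type*} (a : W) (k : ℕ) (f : List W → ℝ) :
    dl (List.replicate (k + 1) a) f = if Even k then f (List.replicate k a) else 0 := by
  induction k generalizing f with
  | zero => simp [dl]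
  | succ k ih =>
    rw [List.replicate_succ, dl, ih]
    simp only [Nat.even_add_one, ← List.replicate_succ]
    by_cases h : Even k <;> simp [h]

variable {W : Type*} [Group W] {V : Type*} [NormedAddCommGroup V] [NormedSpace ℝ V]

theorem rho_mul (ρ : W →* (V ≃ₗᵢ[ℝ] V)) (a b : W) (v : V) : ρ (a * b) v = ρ a (ρ b v) := by
  rw [map_mul]; rfl

theorem bddDelta_eq_dl (ρ : W →* (V ≃ₗᵢ[ℝ] V)) (m : ℕ) (H : V → List W → ℝ)
    (b : (Fin m → W) → (V →L[ℝ] ℝ)) (hb : ∀ g v, b g v = H v (List.ofFn (Fin.partialProd g)))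
    (g : Fin (m + 1) → W)
    (hH : ∀ v l, l.length = m + 1 → H (ρ (g 0) v) (l.map (fun w => g 0 * w)) = H v l) (v : V) :
    bddDelta (contragredient ρ) m b g v = dl (List.ofFn (Fin.partialProd g)) (H v) := by
  rw [dl_ofFn, Fin.sum_univ_succ, Fin.sum_univ_castSucc]
  unfold bddDelta
  simp only [ContinuousLinearMap.add_apply, ContinuousLinearMap.sum_apply,
    ContinuousLinearMap.smul_apply, smul_eq_mul]
  rw [← add_assoc]
  have hc : ∀ i : Fin (m + 1), (fun j => Fin.partialProd g (i.succ.succAbove j)) =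
      Fin.partialProd (Fin.contractNth i (· * ·) g) := by
    intro i
    rw [Fin.partialProd_contractNth]
    rfl
  congr 1
  · congr 1
    · show b (fun j => g j.succ) (ρ (g 0)⁻¹ v) = _
      rw [hb]
      simp only [Fin.val_zero, pow_zero, one_mul, Fin.zero_succAbove]
      have h1 := hH (ρ (g 0)⁻¹ v) (List.ofFn (Fin.partialProd (fun j : Fin m => g j.succ))) (by simp)
      have h2 : ρ (g 0) (ρ (g 0)⁻¹ v) = v := by
        rw [← rho_mul]; simp
      rw [← h1, h2, List.map_ofFn]
      congr 2
      ext j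
      simp only [Function.comp]
      rw [Fin.partialProd_succ']
      rfl
    · refine Finset.sum_congr rfl fun i _ => ?_
      rw [hc, ← hb]
      rfl
  · rw [hc, ← hb]
    simp only [Fin.val_succ, Fin.val_last]
    congr 3
    ext j
    rw [Fin.contractNth]
    simp

/-- Homogeneous list cochain attached to an inhomogeneous cochain. -/
noncomputable def homog (ρ : W →* (V ≃ₗᵢ[ℝ] V)) (n : ℕ) (f : (Fin (n + 1) → W) → (V →L[ℝ] ℝ))
    (v : V) (l : List W) : ℝ :=
  if l.length = n + 2 then
    f (fun i => (l.getD i 1)⁻¹ * l.getD (i + 1) 1) (ρ (l.getD 0 1)⁻¹ v) else 0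

theorem homog_ofFn (ρ : W →* (V ≃ₗᵢ[ℝ] V)) (n : ℕ) (f : (Fin (n + 1) → W) → (V →L[ℝ] ℝ))
    (v : V) (g : Fin (n + 1) → W) : homog ρ n f v (List.ofFn (Fin.partialProd g)) = f g v := by
  have h : ∀ (i : ℕ) (hi : i < n + 2), (List.ofFn (Fin.partialProd g)).getD i 1 =
      Fin.partialProd g ⟨i, hi⟩ := by
    intro i hi
    rw [List.getD_eq_getElem _ _ (by rw [List.length_ofFn]; exact hi), List.getElem_ofFn]
  unfold homog
  rw [if_pos (by simp), h 0 (by omega)]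
  have h0 : Fin.partialProd g ⟨0, by omega⟩ = 1 := Fin.partialProd_zero g
  rw [h0]
  simp only [inv_one, map_one, LinearIsometryEquiv.coe_one, id]
  congr 2
  ext i
  rw [h i (by omega), h (i + 1) (by omega)]
  exact Fin.partialProd_right_inv g i

theorem homog_equi (ρ : W →* (V ≃ₗᵢ[ℝ] V)) (n : ℕ) (f : (Fin (n + 1) → W) → (V →L[ℝ] ℝ))
    (g : W) (v : V) (l : List W) :
    homog ρ n f (ρ g v) (l.map (fun w => g * w)) = homog ρ n f v l := by
  unfold homog
  rw [List.length_map]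
  split_ifs with hl
  · have h : ∀ (i : ℕ) (hi : i < n + 2), (l.map (fun w => g * w)).getD i 1 = g * l.getD i 1 := by
      intro i hi
      rw [List.getD_eq_getElem _ _ (by simpa [hl] using hi), List.getD_eq_getElem _ _ (by omega)]
      simp
    have e1 : (fun i : Fin (n + 1) => ((l.map (fun w => g * w)).getD i 1)⁻¹ *
        (l.map (fun w => g * w)).getD (i + 1) 1) =
        fun i : Fin (n + 1) => (l.getD i 1)⁻¹ * l.getD (i + 1) 1 := by
      ext i
      rw [h i (by omega), h (i + 1) (by omega)]
      group
    rw [e1, h 0 (by omega)]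
    congr 1
    rw [← rho_mul]
    simp
  · rfl

theorem homog_dl (ρ : W →* (V ≃ₗᵢ[ℝ] V)) (n : ℕ) (f : (Fin (n + 1) → W) → (V →L[ℝ] ℝ))
    (hf : bddDelta (contragredient ρ) (n + 1) f = 0) (v : V) (l : List W) :
    dl l (homog ρ n f v) = 0 := by
  by_cases hl : l.length = n + 3
  · set x0 := l.getD 0 1 with hx0
    let g : Fin (n + 2) → W := fun i => (l.getD i 1)⁻¹ * l.getD (i + 1) 1
    have e : l = (List.ofFn (Fin.partialProd g)).map (fun w => x0 * w) := by
      have key : ∀ (i : ℕ) (hi : i < n + 3), x0 * Fin.partialProd g ⟨i, hi⟩ = l.getD i 1 := by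
        intro i
        induction i with
        | zero =>
          intro hi
          have h0 : Fin.partialProd g ⟨0, hi⟩ = 1 := Fin.partialProd_zero g
          rw [h0, mul_one]
        | succ i ih =>
          intro hi
          have h1 : Fin.partialProd g ⟨i + 1, hi⟩ =
              Fin.partialProd g ⟨i, by omega⟩ * g ⟨i, by omega⟩ :=
            Fin.partialProd_succ g ⟨i, by omega⟩
          rw [h1, ← mul_assoc, ih (by omega)]
          simp [g]
      refine List.ext_getElem (by simp [hl]) fun i h1 h2 => ?_
      rw [List.getElem_map, List.getElem_ofFn, key i (by omega), List.getD_eq_getElem _ _ h1]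
    rw [e, dl_map]
    have h1 : (fun l' : List W => homog ρ n f v (l'.map (fun w => x0 * w))) =
        homog ρ n f (ρ x0⁻¹ v) := by
      ext l'
      have := homog_equi ρ n f x0 (ρ x0⁻¹ v) l'
      rw [← this]
      congr 1
      rw [← rho_mul]
      simp
    rw [h1, ← bddDelta_eq_dl ρ (n + 1) (homog ρ n f) f (fun g v => (homog_ofFn ρ n f v g).symm) g
      (fun v l _ => homog_equi ρ n f _ v l), hf]
    rfl
  · rw [dl_congr_len l (g := fun _ => 0), dl_const]
    · simp
    · intro l' hl'
      unfold homog
      rw [if_neg (by omega)]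

end Homogeneous

section Final

variable {G : Type*} [Group G] {V : Type*} [NormedAddCommGroup V] [NormedSpace ℝ V]

theorem homog_EC (ρ : WreathZ G →* (V ≃ₗᵢ[ℝ] V)) (n : ℕ)
    (f : (Fin (n + 1) → WreathZ G) → (V →L[ℝ] ℝ)) {C : ℝ} (hC : 0 ≤ C) (hf : ∀ g, ‖f g‖ ≤ C) :
    EC ρ (homog ρ n f) C where
  bd := by
    intro v l
    unfold homog
    split_ifs
    · refine ((f _).le_opNorm _).trans ?_
      rw [LinearIsometryEquiv.norm_map]
      exact mul_le_mul_of_nonneg_right (hf _) (norm_nonneg _)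
    · rw [abs_zero]; positivity
  add := by
    intro v w l
    unfold homog
    split_ifs <;> simp
  smul := by
    intro c v l
    unfold homog
    split_ifs <;> simp
  equi := homog_equi ρ n f

theorem finite_solution [CompleteSpace V] (hsep : TopologicalSpace.SeparableSpace (V →L[ℝ] ℝ))
    (ρ : WreathZ G →* (V ≃ₗᵢ[ℝ] V)) (n : ℕ)
    (f : (Fin (n + 1) → WreathZ G) → (V →L[ℝ] ℝ)) {C : ℝ} (hC : 0 ≤ C) (hf : ∀ g, ‖f g‖ ≤ C)
    (hδ : bddDelta (contragredient ρ) (n + 1) f = 0) (A : Finset (Fin (n + 1) → WreathZ G)) :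
    ∃ b : (Fin n → WreathZ G) → (V →L[ℝ] ℝ), (∀ g, ‖b g‖ ≤ (n + 2) * C) ∧
      ∀ g ∈ A, bddDelta (contragredient ρ) n b g = f g := by
  classical
  have hfin : (⋃ g ∈ A, ⋃ j : Fin (n + 2), Set.range ((Fin.partialProd g j).left : ℤ → G)).Finite := by
    refine Set.Finite.biUnion A.finite_toSet fun g _ => Set.finite_iUnion fun j => ?_
    have h1 : (Function.mulSupport ((Fin.partialProd g j).left : ℤ → G)).Finite :=
      (Fin.partialProd g j).left.2
    refine ((h1.image ((Fin.partialProd g j).left : ℤ → G)).union (Set.finite_singleton 1)).subset ?_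
    rintro _ ⟨i, rfl⟩
    by_cases hi : ((Fin.partialProd g j).left : ℤ → G) i = 1
    · right; exact hi
    · left; exact ⟨i, hi, rfl⟩
  let S := {x : G // x ∈ insert 1 hfin.toFinset}
  letI : Fintype S := inferInstanceAs (Fintype {x : G // x ∈ insert 1 hfin.toFinset})
  haveI : Nonempty S := ⟨⟨1, Finset.mem_insert_self _ _⟩⟩
  let σ : S → G := fun x => x.1
  have hrep : ∀ g ∈ A, ∀ j, ∃ (u : ZZ S) (k : ℤ), Fin.partialProd g j = bs σ u * tau G k := by
    intro g hg j
    refine exists_bs σ _ fun i => ⟨⟨((Fin.partialProd g j).left : ℤ → G) i, ?_⟩, rfl⟩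
    refine Finset.mem_insert_of_mem (hfin.mem_toFinset.2 ?_)
    exact Set.mem_biUnion hg (Set.mem_iUnion.2 ⟨j, ⟨i, rfl⟩⟩)
  set F := homog ρ n f with hF
  have hEC : EC ρ F C := homog_EC ρ n f hC hf
  have hF0 : ∀ v l, dl l (F v) = 0 := homog_dl ρ n f hδ
  let κ := kappa S
  let X := XX σ
  let c : V → ℝ := fun v => avg κ X (List.replicate (n + 2) 1) (F v)
  let H : V → List (WreathZ G) → ℝ := fun v l => c v - hom κ X l (F v)
  have hFadd : ∀ v w, F (v + w) = fun l => F v l + F w l := fun v w => by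
    ext l; exact hEC.add v w l
  have hFsmul : ∀ (a : ℝ) v, F (a • v) = fun l => a * F v l := fun a v => by
    ext l; exact hEC.smul a v l
  let b : (Fin n → WreathZ G) → (V →L[ℝ] ℝ) := fun g => LinearMap.mkContinuous
    { toFun := fun v => H v (List.ofFn (Fin.partialProd g))
      map_add' := fun v w => by
        simp only [H, c, hFadd, avg_add, hom_add]; ring
      map_smul' := fun a v => by
        simp only [H, c, hFsmul, avg_smul, hom_smul, RingHom.id_apply, smul_eq_mul]; ring }
    ((n + 2) * C) (fun v => by
      have h1 : |c v| ≤ C * ‖v‖ := avg_bound _ _ _ (hEC.bd v)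
      have h2 := hom_bound κ X (List.ofFn (Fin.partialProd g)) (hEC.bd v)
      rw [List.length_ofFn] at h2
      push_cast at h2
      refine (abs_sub _ _).trans ?_
      linarith)
  refine ⟨b, fun g => LinearMap.mkContinuous_norm_le _ (by positivity) _, fun g hg => ?_⟩
  ext v
  rw [bddDelta_eq_dl ρ n H b (fun g v => rfl) g, ← homog_ofFn ρ n f v g]
  · set l := List.ofFn (Fin.partialProd g) with hl
    have hll : l.length = n + 2 := by simp [hl]
    show dl l (fun l' => c v - hom κ X l' (F v)) = F v l
    rw [dl_sub, dl_const, hll]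
    have h1 := homotopy κ X l (F v)
    have h2 : hom κ X l (fun l' => dl l' (F v)) = 0 := by
      have h3 := hom_smul κ X l 0 (fun l' => dl l' (F v))
      simp only [hF0, zero_mul] at h3 ⊢
      exact h3
    have h4 : avg κ X l (F v) = c v := by
      have := avg_const σ hsep hEC l (fun w hw => by
        rw [hl, List.mem_ofFn] at hw
        obtain ⟨j, rfl⟩ := hw
        exact hrep g hg j) v
      rw [hll] at this
      exact this
    have h5 : (if Odd (n + 2) then c v else 0) = c v := by
      split_ifs with ho
      · rfl
      · have h6 := avg_dl κ X (List.replicate (n + 2 + 1) 1) (F v)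
        rw [dl_replicate, if_pos (Nat.not_odd_iff_even.1 ho)] at h6
        have h7 : avg κ X (List.replicate (n + 2 + 1) 1) (fun l' => dl l' (F v)) = 0 := by
          have h3 := avg_smul κ X (List.replicate (n + 2 + 1) 1) 0 (fun l' => dl l' (F v))
          simp only [hF0, zero_mul] at h3 ⊢
          exact h3
        rw [h7] at h6
        exact h6
    rw [h5]
    linarith
  · intro w l _
    show c (ρ (g 0) w) - hom κ X (l.map (fun w => g 0 * w)) (F (ρ (g 0) w)) = c w - hom κ X l (F w)
    have e : ∀ l', F (ρ (g 0) w) (l'.map (fun w => g 0 * w)) = F w l' := hEC.equi (g 0) w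
    rw [hom_map]
    simp only [e]
    congr 1
    have h1 := avg_const σ hsep hEC (List.replicate (n + 2) (g 0)) (fun w' hw => by
      rw [List.eq_of_mem_replicate hw]
      obtain ⟨u, k, h⟩ := hrep g hg 1
      refine ⟨u, k, ?_⟩
      rw [← h]
      have := Fin.partialProd_succ g 0
      simpa using this.symm) (ρ (g 0) w)
    rw [List.length_replicate] at h1
    show avg κ X (List.replicate (n + 2) 1) (F (ρ (g 0) w)) = avg κ X (List.replicate (n + 2) 1) (F w)
    rw [← h1]
    have h2 : List.replicate (n + 2) (g 0) = (List.replicate (n + 2) 1).map (fun w => g 0 * w) := by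
      rw [List.map_replicate, mul_one]
    rw [h2, avg_map]
    simp only [e]
    rfl

theorem compactness (ρ : WreathZ G →* (V ≃ₗᵢ[ℝ] V)) (n : ℕ)
    (f : (Fin (n + 1) → WreathZ G) → (V →L[ℝ] ℝ)) {C : ℝ} (hC : 0 ≤ C)
    (h : ∀ A : Finset (Fin (n + 1) → WreathZ G),
      ∃ b : (Fin n → WreathZ G) → (V →L[ℝ] ℝ), (∀ g, ‖b g‖ ≤ C) ∧
      ∀ g ∈ A, bddDelta (contragredient ρ) n b g = f g) :
    ∃ b : (Fin n → WreathZ G) → (V →L[ℝ] ℝ), (∀ g, ‖b g‖ ≤ C) ∧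
      bddDelta (contragredient ρ) n b = f := by
  classical
  choose b hb1 hb2 using h
  let U : Ultrafilter (Finset (Fin (n + 1) → WreathZ G)) := Ultrafilter.of Filter.atTop
  have hU : (↑U : Filter (Finset (Fin (n + 1) → WreathZ G))) ≤ Filter.atTop := Ultrafilter.of_le _
  have hbv : ∀ A g v, |b A g v| ≤ C * ‖v‖ := fun A g v =>
    ((b A g).le_opNorm v).trans (mul_le_mul_of_nonneg_right (hb1 A g) (norm_nonneg v))
  have hlim : ∀ g v, ∃ x ∈ Set.Icc (-(C * ‖v‖)) (C * ‖v‖),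
      Filter.Tendsto (fun A => b A g v) (↑U : Filter (Finset (Fin (n + 1) → WreathZ G))) (nhds x) := by
    intro g v
    have hK : IsCompact (Set.Icc (-(C * ‖v‖)) (C * ‖v‖)) := isCompact_Icc
    obtain ⟨x, hx, hx2⟩ := hK.ultrafilter_le_nhds (U.map (fun A => b A g v)) (by
      rw [Filter.le_principal_iff]
      exact Filter.mem_map.2 (Filter.univ_mem' (fun A => abs_le.1 (hbv A g v))))
    exact ⟨x, hx, hx2⟩
  choose B hB1 hB2 using hlim
  let b' : (Fin n → WreathZ G) → (V →L[ℝ] ℝ) := fun g => LinearMap.mkContinuous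
    { toFun := B g
      map_add' := fun v w => by
        refine tendsto_nhds_unique (hB2 g (v + w)) ?_
        simp only [map_add]
        exact (hB2 g v).add (hB2 g w)
      map_smul' := fun a v => by
        refine tendsto_nhds_unique (hB2 g (a • v)) ?_
        simp only [map_smul, RingHom.id_apply, smul_eq_mul]
        exact (hB2 g v).const_mul a } C (fun v => abs_le.2 (hB1 g v))
  have hb' : ∀ g v, Filter.Tendsto (fun A => b A g v) (↑U : Filter (Finset (Fin (n + 1) → WreathZ G))) (nhds (b' g v)) := hB2
  refine ⟨b', fun g => LinearMap.mkContinuous_norm_le _ hC _, ?_⟩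
  ext g v
  have h1 : Filter.Tendsto (fun A => bddDelta (contragredient ρ) n (b A) g v) (↑U : Filter (Finset (Fin (n + 1) → WreathZ G)))
      (nhds (bddDelta (contragredient ρ) n b' g v)) := by
    unfold bddDelta contragredient
    simp only [ContinuousLinearMap.add_apply, ContinuousLinearMap.sum_apply,
      ContinuousLinearMap.smul_apply, smul_eq_mul]
    refine ((hb' _ _).add (tendsto_finsetSum _ fun i _ => (hb' _ _).const_mul _)).add
      ((hb' _ _).const_mul _)
  refine tendsto_nhds_unique h1 ?_
  refine tendsto_const_nhds.congr' ?_
  have h2 : ∀ᶠ A in (Filter.atTop : Filter (Finset (Fin (n + 1) → WreathZ G))), g ∈ A :=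
    (Filter.eventually_ge_atTop {g}).mono fun A hA => hA (Finset.mem_singleton_self g)
  filter_upwards [hU h2] with A hA
  rw [hb2 A g hA]

end Final


/-- For any group `G` and the restricted wreath product `W = G ≀ ℤ`,
the bounded cohomology `Hb^n(W,E)` vanishes for all `n ≥ 1` and every separable dual
Banach `W`-module `E = F*` (with the contragredient action). -/
theorem wreathZ_bounded_cohomology_vanishes.{u}
    (G : Type*) [Group G]
    (F : Type u) [NormedAddCommGroup F] [NormedSpace ℝ F] [CompleteSpace F]
    (ρ : WreathZ G →* (F ≃ₗᵢ[ℝ] F))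
    (hsep : TopologicalSpace.SeparableSpace (F →L[ℝ] ℝ)) :
    HbVanish (contragredient ρ) := by
  intro n f hf hδ
  obtain ⟨C, hC⟩ := hf
  have hC0 : 0 ≤ C := (norm_nonneg _).trans (hC 1)
  obtain ⟨b, hb1, hb2⟩ := compactness ρ n f (C := (n + 2) * C) (by positivity)
    (finite_solution hsep ρ n f hC0 hC hδ)
  exact ⟨b, ⟨_, hb1⟩, hb2⟩
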